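/- arXiv:2012.11872 — 7 statements merged into one kernel-verified Lean document; each statement's English description precedes it below -/
import Mathlib

section
/- Let (α;β) and (α';β') be bicompositions (pairs of weak compositions of equal length with no zero column). Then every bicomposition occurring in the quasi-shuffle product (α;β)*(α';β'), taken over the monoid ℕ×ℕ with componentwise addition and viewing a bicomposition as the list of its columns, again has no zero column, and M_{(α;β)}(X,Y) · M_{(α';β')}(X,Y) = M_{(α;β)*(α';β')}(X,Y) in ℚ[[X,Y]], where M_{(·)}(X,Y) is extended ℚ-linearly to linear combinations of bicompositions. -/
open Finset

/-- quasi-shuffle product on the free ℚ-module on lists over an additive commutative monoid -/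
noncomputable def qsh {A : Type} [AddCommMonoid A] : List A → List A → (List A →₀ ℚ)
  | [], b => Finsupp.single b 1
  | a :: a', [] => Finsupp.single (a :: a') 1
  | a :: a', b :: b' =>
      (qsh a' (b :: b')).mapDomain (a :: ·) +
      (qsh (a :: a') b').mapDomain (b :: ·) +
      (qsh a' b').mapDomain ((a + b) :: ·)
termination_by a b => a.length + b.length

/-- the bimonomial quasisymmetric function M_{(α;β)}(X,Y) of a bicomposition (list of columns):
its coefficient at a monomial ν is the number of strictly increasing tuples I with
x_I^α·y_I^β = ν (`Set.ncard` takes the value 0 on infinite sets). -/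
noncomputable def biM (c : List (ℕ × ℕ)) : MvPowerSeries (ℕ+ ⊕ ℕ+) ℚ :=
  fun ν => (Set.ncard {I : Fin c.length → ℕ+ | StrictMono I ∧
    (∑ j, (Finsupp.single (Sum.inl (I j)) (c.get j).1 +
           Finsupp.single (Sum.inr (I j)) (c.get j).2)) = ν} : ℚ)

/-- the exponent vector of the column `a` placed at index `i` -/
noncomputable def colMon (i : ℕ+) (a : ℕ × ℕ) : (ℕ+ ⊕ ℕ+) →₀ ℕ :=
  Finsupp.single (Sum.inl i) a.1 + Finsupp.single (Sum.inr i) a.2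

/-- truncation of `biM` to the `n` indices `m, m+1, ..., m+n-1` -/
noncomputable def truncM : ℕ → ℕ+ → List (ℕ × ℕ) → MvPowerSeries (ℕ+ ⊕ ℕ+) ℚ
  | _, _, [] => 1
  | 0, _, _ :: _ => 0
  | n + 1, m, a :: c =>
      MvPowerSeries.monomial (colMon m a) 1 * truncM n (m + 1) c + truncM n (m + 1) (a :: c)

theorem truncM_nil (n : ℕ) (m : ℕ+) : truncM n m [] = 1 := by
  cases n <;> simp [truncM]

theorem colMon_add (i : ℕ+) (a b : ℕ × ℕ) : colMon i (a + b) = colMon i a + colMon i b := by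
  simp only [colMon, Prod.fst_add, Prod.snd_add, Finsupp.single_add]
  abel

/-- linear extension of `truncM` -/
noncomputable def linM (n : ℕ) (m : ℕ+) :
    (List (ℕ × ℕ) →₀ ℚ) →ₗ[ℚ] MvPowerSeries (ℕ+ ⊕ ℕ+) ℚ :=
  Finsupp.linearCombination ℚ (truncM n m)

theorem linM_cons (n : ℕ) (m : ℕ+) (a : ℕ × ℕ) (f : List (ℕ × ℕ) →₀ ℚ) :
    linM (n + 1) m (f.mapDomain (a :: ·)) =
      MvPowerSeries.monomial (colMon m a) 1 * linM n (m + 1) f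
        + linM n (m + 1) (f.mapDomain (a :: ·)) := by
  induction f using Finsupp.induction_linear with
  | zero => simp
  | add f g hf hg =>
    simp only [Finsupp.mapDomain_add, map_add, hf, hg]
    ring
  | single d q =>
    simp [linM, Finsupp.mapDomain_single, truncM, smul_add]

theorem linM_zero_cons (m : ℕ+) (a : ℕ × ℕ) (f : List (ℕ × ℕ) →₀ ℚ) :
    linM 0 m (f.mapDomain (a :: ·)) = 0 := by
  induction f using Finsupp.induction_linear with
  | zero => simp
  | add f g hf hg => simp only [Finsupp.mapDomain_add, map_add, hf, hg, add_zero]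
  | single d q => simp [linM, Finsupp.mapDomain_single, truncM]

theorem truncM_mul (n : ℕ) : ∀ (m : ℕ+) (c c' : List (ℕ × ℕ)),
    truncM n m c * truncM n m c' = linM n m (qsh c c') := by
  induction n with
  | zero =>
    intro m c c'
    rcases c with _ | ⟨a, c⟩
    · simp [qsh, linM, truncM_nil]
    rcases c' with _ | ⟨b, c'⟩
    · simp [qsh, linM, truncM_nil]
    rw [qsh, map_add, map_add, linM_zero_cons, linM_zero_cons, linM_zero_cons]
    simp [truncM]
  | succ n ih =>
    intro m c c'
    rcases c with _ | ⟨a, c⟩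
    · simp [qsh, linM, truncM_nil]
    rcases c' with _ | ⟨b, c'⟩
    · simp [qsh, linM, truncM_nil]
    have h := ih (m + 1) (a :: c) (b :: c')
    rw [qsh, map_add, map_add] at h
    rw [qsh, map_add, map_add, linM_cons, linM_cons, linM_cons, ← ih, ← ih, ← ih, truncM, truncM,
      colMon_add]
    have e : (MvPowerSeries.monomial (colMon m a + colMon m b) (1 : ℚ)) =
        MvPowerSeries.monomial (colMon m a) 1 * MvPowerSeries.monomial (colMon m b) 1 := by
      rw [MvPowerSeries.monomial_mul_monomial, one_mul]
    rw [e]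
    linear_combination h

/-- index tuples with all indices at least `m` -/
def tupSet (m : ℕ+) (c : List (ℕ × ℕ)) (ν : (ℕ+ ⊕ ℕ+) →₀ ℕ) : Set (Fin c.length → ℕ+) :=
  {I | StrictMono I ∧ (∀ j, m ≤ I j) ∧ ∑ j, colMon (I j) (c.get j) = ν}

theorem tupSet_cons (m : ℕ+) (a : ℕ × ℕ) (c : List (ℕ × ℕ)) (ν : (ℕ+ ⊕ ℕ+) →₀ ℕ) :
    tupSet m (a :: c) ν =
      (fun I => (Fin.cons m I : Fin (c.length + 1) → ℕ+)) ''
        {I | I ∈ tupSet (m + 1) c (ν - colMon m a) ∧ colMon m a ≤ ν}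
      ∪ tupSet (m + 1) (a :: c) ν := by
  ext I
  change Fin (c.length + 1) → ℕ+ at I
  have key : ∀ I : Fin (c.length + 1) → ℕ+, ∑ j, colMon (I j) ((a :: c).get j) =
      colMon (I 0) a + ∑ j : Fin c.length, colMon (I j.succ) (c.get j) := by
    intro I
    exact Fin.sum_univ_succ (fun j : Fin (c.length + 1) => colMon (I j) ((a :: c).get j))
  constructor
  · rintro ⟨h1, h2, h3⟩
    change Fin (c.length + 1) → ℕ+ at I
    rcases (h2 (0 : Fin (c.length + 1))).eq_or_lt with h | h
    · left
      refine ⟨fun j => I j.succ, ⟨⟨?_, ?_, ?_⟩, ?_⟩, ?_⟩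
      · exact fun i j hij => h1 (Fin.succ_lt_succ_iff.2 hij)
      · intro j
        rw [PNat.add_one_le_iff, h]
        exact h1 (Fin.succ_pos j)
      · have h5 := (key I).symm.trans h3
        rw [← h5, ← h, add_tsub_cancel_left]
      · have h5 := (key I).symm.trans h3
        rw [← h5, ← h]
        exact le_self_add
      · funext j
        refine Fin.cases ?_ (fun j => ?_) j
        · exact h
        · rfl
    · right
      refine ⟨h1, fun j => ?_, h3⟩
      rw [PNat.add_one_le_iff]
      exact lt_of_lt_of_le h (h1.monotone (Fin.zero_le (n := c.length + 1) j))
  · rintro (⟨I, ⟨⟨h1, h2, h3⟩, h4⟩, rfl⟩ | ⟨h1, h2, h3⟩)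
    · refine ⟨?_, ?_, ?_⟩
      · intro i j
        change Fin (c.length + 1) at i j
        refine Fin.cases ?_ (fun i => ?_) i <;> refine Fin.cases ?_ (fun j => ?_) j
        · intro h; exact absurd h (lt_irrefl _)
        · intro _; exact PNat.add_one_le_iff.1 (h2 j)
        · intro h; exact absurd h (Fin.not_lt_zero _)
        · intro h; exact h1 (Fin.succ_lt_succ_iff.1 h)
      · intro j
        refine Fin.cases (n := c.length) (motive := fun j => m ≤ (Fin.cons m I : Fin (c.length + 1) → ℕ+) j) ?_ (fun j => ?_) j
        · simp
        · simpa using (PNat.add_one_le_iff.1 (h2 j)).le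
      · refine (key (Fin.cons m I)).trans ?_
        simp only [Fin.cons_zero, Fin.cons_succ]
        rw [h3, add_tsub_cancel_of_le h4]
    · exact ⟨h1, fun j => (PNat.add_one_le_iff.1 (h2 j)).le, h3⟩

theorem coeff_truncM (n : ℕ) : ∀ (m : ℕ+) (c : List (ℕ × ℕ)) (ν : (ℕ+ ⊕ ℕ+) →₀ ℕ),
    (∀ p ∈ c, p ≠ (0, 0)) →
    (∀ i : ℕ+, (m : ℕ) + n ≤ i → ν (Sum.inl i) = 0 ∧ ν (Sum.inr i) = 0) →
    (tupSet m c ν).Finite ∧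
      MvPowerSeries.coeff ν (truncM n m c) = ((tupSet m c ν).ncard : ℚ) := by
  have hnil : ∀ n (m : ℕ+) (ν : (ℕ+ ⊕ ℕ+) →₀ ℕ), (tupSet m [] ν).Finite ∧
      MvPowerSeries.coeff ν (truncM n m []) = ((tupSet m [] ν).ncard : ℚ) := by
    intro n m ν
    have : Subsingleton (Fin ([] : List (ℕ × ℕ)).length → ℕ+) :=
      ⟨fun f g => funext fun j => Fin.elim0 j⟩
    refine ⟨Set.toFinite _, ?_⟩
    rw [truncM_nil, MvPowerSeries.coeff_one]
    split_ifs with h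
    · have : tupSet m [] ν = {fun j => Fin.elim0 j} := by
        ext I
        simp only [Set.mem_singleton_iff]
        refine ⟨fun _ => Subsingleton.elim _ _, fun _ => ⟨fun i => Fin.elim0 i, fun i => Fin.elim0 i, ?_⟩⟩
        rw [h]; rfl
      rw [this, Set.ncard_singleton]; simp
    · have : tupSet m [] ν = ∅ := by
        ext I
        simp only [Set.mem_empty_iff_false, iff_false]
        rintro ⟨_, _, h3⟩
        exact h h3.symm
      rw [this]; simp
  induction n with
  | zero =>
    intro m c ν hc hν
    rcases c with _ | ⟨a, c⟩
    · exact hnil _ _ _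
    have : tupSet m (a :: c) ν = ∅ := by
      ext I
      simp only [Set.mem_empty_iff_false, iff_false]
      rintro ⟨_, h2, h3⟩
      change Fin (c.length + 1) → ℕ+ at I
      have h4 : colMon (I 0) a ≤ ν := by
        rw [← h3]
        exact Finset.single_le_sum (f := fun j : Fin (c.length + 1) => colMon (I j) ((a :: c).get j))
          (fun _ _ => zero_le) (Finset.mem_univ 0)
      have h5 := hν (I 0) (by simpa using h2 (0 : Fin (c.length + 1)))
      have h6 := h4 (Sum.inl (I 0))
      have h7 := h4 (Sum.inr (I 0))
      simp [colMon, h5.1, h5.2] at h6 h7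
      exact hc a (by simp) (Prod.ext h6 h7)
    rw [this]
    simp [truncM]
  | succ n ih =>
    intro m c ν hc hν
    rcases c with _ | ⟨a, c⟩
    · exact hnil _ _ _
    have hb : ∀ i : ℕ+, ((m + 1 : ℕ+) : ℕ) + n ≤ i → ν (Sum.inl i) = 0 ∧ ν (Sum.inr i) = 0 := by
      intro i hi
      apply hν
      rw [PNat.add_coe, PNat.one_coe] at hi
      omega
    obtain ⟨f1, e1⟩ := ih (m + 1) (a :: c) ν hc hb
    obtain ⟨f2, e2⟩ := ih (m + 1) c (ν - colMon m a) (fun p hp => hc p (by simp [hp])) (by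
      intro i hi
      obtain ⟨h1, h2⟩ := hb i hi
      simp [h1, h2])
    have f3 : {I | I ∈ tupSet (m + 1) c (ν - colMon m a) ∧ colMon m a ≤ ν}.Finite :=
      f2.subset (fun I h => h.1)
    have hinj : Function.Injective (fun I : Fin c.length → ℕ+ =>
        (Fin.cons m I : Fin (c.length + 1) → ℕ+)) := Fin.cons_right_injective (α := fun _ => ℕ+) m
    rw [tupSet_cons]
    refine ⟨(f3.image _).union f1, ?_⟩
    have hd : Disjoint ((fun I => (Fin.cons m I : Fin (c.length + 1) → ℕ+)) ''
        {I | I ∈ tupSet (m + 1) c (ν - colMon m a) ∧ colMon m a ≤ ν})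
        (tupSet (m + 1) (a :: c) ν) := by
      rw [Set.disjoint_left]
      rintro _ ⟨I, _, rfl⟩ ⟨_, h2, _⟩
      have := PNat.add_one_le_iff.1 (h2 (0 : Fin (c.length + 1)))
      simp at this
    have hu := Set.ncard_union_eq hd (f3.image _) f1
    refine Eq.trans ?_ (congrArg (Nat.cast : ℕ → ℚ) hu.symm)
    rw [Nat.cast_add, ← e1, Set.ncard_image_of_injective _ hinj, truncM, map_add,
      MvPowerSeries.coeff_monomial_mul]
    congr 1
    split_ifs with h
    · simp [h, e2]
    · simp [h]

theorem coeff_biM (n : ℕ) (c : List (ℕ × ℕ)) (ν : (ℕ+ ⊕ ℕ+) →₀ ℕ)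
    (hc : ∀ p ∈ c, p ≠ (0, 0))
    (hν : ∀ i : ℕ+, 1 + n ≤ (i : ℕ) → ν (Sum.inl i) = 0 ∧ ν (Sum.inr i) = 0) :
    MvPowerSeries.coeff ν (biM c) = MvPowerSeries.coeff ν (truncM n 1 c) := by
  rw [(coeff_truncM n 1 c ν hc (by simpa using hν)).2]
  change ((Set.ncard _ : ℕ) : ℚ) = _
  congr 2
  ext I
  simp [tupSet, colMon]

theorem qsh_support (c c' : List (ℕ × ℕ)) :
    (∀ p ∈ c, p ≠ (0, 0)) → (∀ p ∈ c', p ≠ (0, 0)) →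
    ∀ d ∈ (qsh c c').support, ∀ p ∈ d, p ≠ (0, 0) := by
  have aux : ∀ (a : ℕ × ℕ) (f : List (ℕ × ℕ) →₀ ℚ), a ≠ (0, 0) →
      (∀ d ∈ f.support, ∀ p ∈ d, p ≠ (0, 0)) →
      ∀ d ∈ (f.mapDomain (a :: ·)).support, ∀ p ∈ d, p ≠ (0, 0) := by
    intro a f ha hf d hd
    obtain ⟨e, he, rfl⟩ := Finset.mem_image.1 (Finsupp.mapDomain_support hd)
    intro p hp
    rcases List.mem_cons.1 hp with rfl | hp
    · exact ha
    · exact hf e he p hp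
  induction c, c' using qsh.induct with
  | case1 b =>
    intro _ h d hd
    rw [qsh] at hd
    obtain rfl := Finset.mem_singleton.1 (Finsupp.support_single_subset hd)
    exact h
  | case2 a a' =>
    intro h _ d hd
    rw [qsh] at hd
    obtain rfl := Finset.mem_singleton.1 (Finsupp.support_single_subset hd)
    exact h
  | case3 a a' b b' ih1 ih2 ih3 =>
    intro h h' d hd
    have ha := h a (by simp)
    have hb := h' b (by simp)
    have hA : ∀ p ∈ a', p ≠ (0, 0) := fun p hp => h p (by simp [hp])
    have hB : ∀ p ∈ b', p ≠ (0, 0) := fun p hp => h' p (by simp [hp])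
    rw [qsh] at hd
    rcases Finset.mem_union.1 (Finsupp.support_add hd) with hd | hd
    · rcases Finset.mem_union.1 (Finsupp.support_add hd) with hd | hd
      · exact aux _ _ ha (ih1 hA h') d hd
      · exact aux _ _ hb (ih2 h hB) d hd
    · refine aux _ _ ?_ (ih3 hA hB) d hd
      intro h0
      apply ha
      simp only [Prod.ext_iff, Prod.fst_add, Prod.snd_add] at h0 ⊢
      omega

/-- For bicompositions (α;β), (α';β') (lists of columns in ℕ×ℕ with no zero
column), every bicomposition occurring in the quasi-shuffle product (α;β)*(α';β') over the
monoid ℕ×ℕ again has no zero column, and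
M_{(α;β)}(X,Y) · M_{(α';β')}(X,Y) = M_{(α;β)*(α';β')}(X,Y) in ℚ[[X,Y]], where M is extended
ℚ-linearly. -/
theorem stmt1 (c c' : List (ℕ × ℕ))
    (hc : ∀ p ∈ c, p ≠ (0, 0)) (hc' : ∀ p ∈ c', p ≠ (0, 0)) :
    (∀ d ∈ (qsh c c').support, ∀ p ∈ d, p ≠ (0, 0)) ∧
    biM c * biM c' = (qsh c c').sum fun d q => q • biM d := by
  refine ⟨qsh_support c c' hc hc', ?_⟩
  ext ν
  obtain ⟨n, hn⟩ : ∃ n : ℕ, ∀ i : ℕ+, 1 + n ≤ (i : ℕ) →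
      ν (Sum.inl i) = 0 ∧ ν (Sum.inr i) = 0 := by
    refine ⟨ν.support.sup (Sum.elim (fun i => (i : ℕ)) (fun i => (i : ℕ))), fun i hi => ?_⟩
    constructor
    · by_contra h
      have := Finset.le_sup (f := Sum.elim (fun i : ℕ+ => (i : ℕ)) (fun i : ℕ+ => (i : ℕ)))
        (Finsupp.mem_support_iff.2 h)
      simp only [Sum.elim_inl] at this
      omega
    · by_contra h
      have := Finset.le_sup (f := Sum.elim (fun i : ℕ+ => (i : ℕ)) (fun i : ℕ+ => (i : ℕ)))
        (Finsupp.mem_support_iff.2 h)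
      simp only [Sum.elim_inr] at this
      omega
  have hle : ∀ μ ≤ ν, ∀ i : ℕ+, 1 + n ≤ (i : ℕ) → μ (Sum.inl i) = 0 ∧ μ (Sum.inr i) = 0 := by
    intro μ hμ i hi
    obtain ⟨h1, h2⟩ := hn i hi
    have h3 := hμ (Sum.inl i)
    have h4 := hμ (Sum.inr i)
    omega
  have hL : MvPowerSeries.coeff ν (biM c * biM c') =
      MvPowerSeries.coeff ν (truncM n 1 c * truncM n 1 c') := by
    classical
    rw [MvPowerSeries.coeff_mul, MvPowerSeries.coeff_mul]
    refine Finset.sum_congr rfl fun p hp => ?_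
    have hp := Finset.HasAntidiagonal.mem_antidiagonal.1 hp
    rw [coeff_biM n c p.1 hc (hle _ (hp ▸ le_self_add)),
      coeff_biM n c' p.2 hc' (hle _ (hp ▸ le_add_self))]
  rw [hL, truncM_mul, linM, Finsupp.linearCombination_apply, Finsupp.sum, Finsupp.sum, map_sum,
    map_sum]
  refine Finset.sum_congr rfl fun d hd => ?_
  have := coeff_biM n d ν (qsh_support c c' hc hc' d hd) hn
  simp [this]
end

section
/- Let (α;β) and (α';β') be upper-left weak bicompositions, i.e. pairs of weak compositions of equal length whose first entries α, α' are left weak compositions. Then for each such pair the power series M_{(α;β)}(X,Y) (coefficient at a monomial ν being the number of strictly increasing tuples I with x_I^α·y_I^β = ν) is well defined (all these counts are finite), every bicomposition occurring in the quasi-shuffle product (α;β)*(α';β') over the monoid ℕ×ℕ is again upper-left weak, and M_{(α;β)}(X,Y) · M_{(α';β')}(X,Y) = M_{(α;β)*(α';β')}(X,Y) in ℚ[[X,Y]], where M_{(·)}(X,Y) is extended ℚ-linearly. -/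
open Finset

/-- an upper-left weak bicomposition (a list of columns whose first-row list is left weak) -/
def UpperLeftWeak (c : List (ℕ × ℕ)) : Prop := ∀ p : ℕ × ℕ, c.getLast? = some p → 0 < p.1

/-- the monomial of x- and y-variables x_I^α·y_I^β attached to a bicomposition and a tuple I -/
noncomputable def bimon (c : List (ℕ × ℕ)) (I : Fin c.length → ℕ+) : (ℕ+ ⊕ ℕ+) →₀ ℕ :=
  ∑ j, (Finsupp.single (Sum.inl (I j)) (c.get j).1 +
        Finsupp.single (Sum.inr (I j)) (c.get j).2)

/-- exponent of a single column placed at index i -/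
noncomputable def colE (i : ℕ+) (p : ℕ × ℕ) : (ℕ+ ⊕ ℕ+) →₀ ℕ :=
  Finsupp.single (Sum.inl i) p.1 + Finsupp.single (Sum.inr i) p.2

theorem colE_add (i : ℕ+) (p q : ℕ × ℕ) : colE i (p + q) = colE i p + colE i q := by
  simp only [colE, Prod.fst_add, Prod.snd_add, Finsupp.single_add]
  abel

/-- the monomial of a single column -/
noncomputable def colM (i : ℕ+) (p : ℕ × ℕ) : MvPowerSeries (ℕ+ ⊕ ℕ+) ℚ :=
  MvPowerSeries.monomial (colE i p) 1

theorem colM_add (i : ℕ+) (p q : ℕ × ℕ) : colM i (p + q) = colM i p * colM i q := by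
  simp [colM, colE_add, MvPowerSeries.monomial_mul_monomial]

/-- truncated version -/
noncomputable def truncG : List ℕ+ → List (ℕ × ℕ) → MvPowerSeries (ℕ+ ⊕ ℕ+) ℚ
  | _, [] => 1
  | [], _ :: _ => 0
  | i :: L, a :: c => truncG L (a :: c) + colM i a * truncG L c

/-- linear extension -/
noncomputable def truncL (L : List ℕ+) :
    (List (ℕ × ℕ) →₀ ℚ) →ₗ[ℚ] MvPowerSeries (ℕ+ ⊕ ℕ+) ℚ :=
  Finsupp.linearCombination ℚ (truncG L)

theorem truncL_nil (a : ℕ × ℕ) (f : List (ℕ × ℕ) →₀ ℚ) :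
    truncL [] (f.mapDomain (a :: ·)) = 0 := by
  rw [truncL, Finsupp.linearCombination_mapDomain, Finsupp.linearCombination_apply]
  simp [Function.comp, truncG]

theorem truncL_cons (i : ℕ+) (L : List ℕ+) (a : ℕ × ℕ) (f : List (ℕ × ℕ) →₀ ℚ) :
    truncL (i :: L) (f.mapDomain (a :: ·)) =
      truncL L (f.mapDomain (a :: ·)) + colM i a * truncL L f := by
  rw [truncL, truncL, Finsupp.linearCombination_mapDomain, Finsupp.linearCombination_mapDomain,
    Finsupp.linearCombination_apply, Finsupp.linearCombination_apply,
    Finsupp.linearCombination_apply, Finsupp.sum, Finsupp.sum, Finsupp.sum, Finset.mul_sum,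
    ← Finset.sum_add_distrib]
  refine Finset.sum_congr rfl fun d _ => ?_
  simp [truncG, smul_add]

theorem truncG_nil (L : List ℕ+) : truncG L [] = 1 := by
  cases L <;> simp [truncG]

theorem qsh_nil_right (c : List (ℕ × ℕ)) : qsh c [] = Finsupp.single c 1 := by
  cases c <;> simp [qsh]

theorem trunc_mul (L : List ℕ+) : ∀ c c' : List (ℕ × ℕ),
    truncG L c * truncG L c' = truncL L (qsh c c') := by
  induction L with
  | nil =>
    intro c c'
    cases c with
    | nil => simp [truncG, qsh, truncL]
    | cons a c =>
      cases c' with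
      | nil => simp [truncG, qsh, truncL]
      | cons b c' => 
        rw [qsh]
        simp only [map_add, truncL_nil]
        simp [truncG]
  | cons i L ih =>
    intro c c'
    cases c with
    | nil => simp [truncG, qsh, truncL]
    | cons a c =>
      cases c' with
      | nil => simp [truncG, qsh, truncL]
      | cons b c' => 
        have h := ih (a :: c) (b :: c')
        rw [qsh] at h ⊢
        simp only [map_add, truncL_cons] at h ⊢
        rw [← ih, ← ih, ← ih, colM_add, truncG, truncG] at *
        linear_combination h

theorem truncG_eq (L : List ℕ+) : ∀ c : List (ℕ × ℕ),
    truncG L c = ((L.sublistsLen c.length).map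
      (fun J => MvPowerSeries.monomial (List.zipWith colE J c).sum (1 : ℚ))).sum := by
  induction L with
  | nil =>
    intro c
    cases c <;> simp [truncG]
  | cons i L ih =>
    intro c
    cases c with
    | nil => simp [truncG]
    | cons a c =>
      rw [truncG, ih, ih]
      simp only [List.length_cons, List.sublistsLen_succ_cons, List.map_append, List.sum_append,
        List.map_map, ← List.sum_map_mul_left]
      congr 2
      refine List.map_congr_left fun J _ => ?_
      simp [colM, MvPowerSeries.monomial_mul_monomial]

theorem bimon_eq (c : List (ℕ × ℕ)) (I : Fin c.length → ℕ+) :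
    bimon c I = (List.zipWith colE (List.ofFn I) c).sum := by
  have : List.zipWith colE (List.ofFn I) c = List.ofFn (fun j => colE (I j) (c.get j)) := by
    apply List.ext_getElem
    · simp
    · intro n h1 h2
      simp
  rw [this, List.sum_ofFn]
  rfl

theorem bimon_bound (c : List (ℕ × ℕ)) (hc : UpperLeftWeak c) (N : ℕ+)
    (ν : (ℕ+ ⊕ ℕ+) →₀ ℕ) (hN : ∀ i, ν (Sum.inl i) ≠ 0 → i ≤ N)
    (I : Fin c.length → ℕ+) (hI : StrictMono I) (h : bimon c I = ν) (j : Fin c.length) :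
    I j ≤ N := by
  have hpos : 0 < c.length := j.pos
  let l : Fin c.length := ⟨c.length - 1, by omega⟩
  have hl : 0 < (c.get l).1 := by
    apply hc
    simp [l, List.getLast?_eq_getElem?]
  have h1 : I j ≤ I l := hI.monotone (by rw [Fin.le_def]; simp only [l]; omega)
  refine h1.trans (hN _ ?_)
  rw [← h, bimon, Finsupp.finsetSum_apply]
  have h2 := Finset.single_le_sum (s := Finset.univ) (f := fun k =>
    (Finsupp.single (Sum.inl (I k)) (c.get k).1 +
      Finsupp.single (Sum.inr (I k)) (c.get k).2 : (ℕ+ ⊕ ℕ+) →₀ ℕ) (Sum.inl (I l)))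
    (fun _ _ => Nat.zero_le _) (Finset.mem_univ l)
  simp only [Finsupp.add_apply, Finsupp.single_eq_same] at h2 ⊢
  omega

theorem exists_bound (ν : (ℕ+ ⊕ ℕ+) →₀ ℕ) : ∃ N : ℕ+, ∀ i, ν (Sum.inl i) ≠ 0 → i ≤ N := by
  have hf : {i : ℕ+ | ν (Sum.inl i) ≠ 0}.Finite := by
    refine (ν.support.finite_toSet.preimage (f := Sum.inl)
      (Sum.inl_injective.injOn)).subset fun i hi => by simpa using hi
  obtain ⟨N, hN⟩ := hf.bddAbove
  exact ⟨N, fun i hi => hN hi⟩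

theorem bimon_finite (c : List (ℕ × ℕ)) (hc : UpperLeftWeak c) (ν : (ℕ+ ⊕ ℕ+) →₀ ℕ) :
    {I : Fin c.length → ℕ+ | StrictMono I ∧ bimon c I = ν}.Finite := by
  obtain ⟨N, hN⟩ := exists_bound ν
  refine (Set.Finite.pi' (fun _ : Fin c.length => Set.finite_Iic N)).subset ?_
  rintro I ⟨hI, h⟩ j
  exact bimon_bound c hc N ν hN I hI h j

theorem coeff_biM_s2 (c : List (ℕ × ℕ)) (hc : UpperLeftWeak c) (N : ℕ+)
    (ν : (ℕ+ ⊕ ℕ+) →₀ ℕ) (hN : ∀ i, ν (Sum.inl i) ≠ 0 → i ≤ N) :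
    MvPowerSeries.coeff ν (biM c) =
      MvPowerSeries.coeff ν (truncG ((Finset.Icc 1 N).sort (· ≤ ·)) c) := by
  classical
  set L := (Finset.Icc 1 N).sort (· ≤ ·) with hL
  have hLs : L.SortedLT := Finset.sortedLT_sort _
  have hLm : ∀ i, i ∈ L ↔ i ≤ N := by simp [hL]
  have e1 : MvPowerSeries.coeff ν (biM c) =
      (Set.ncard {I : Fin c.length → ℕ+ | StrictMono I ∧ bimon c I = ν} : ℚ) := rfl
  rw [e1, ← Set.ncard_image_of_injective _ (List.ofFn_injective)]
  have e2 : (List.ofFn '' {I : Fin c.length → ℕ+ | StrictMono I ∧ bimon c I = ν}) =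
      ((((L.sublistsLen c.length).filter
        (fun J => ν = (List.zipWith colE J c).sum)).toFinset : Finset (List ℕ+)) :
          Set (List ℕ+)) := by
    ext J
    simp only [Set.mem_image, Set.mem_ofPred_eq, List.coe_toFinset, List.mem_filter,
      List.mem_sublistsLen, decide_eq_true_eq]
    constructor
    · rintro ⟨I, ⟨hI, h⟩, rfl⟩
      refine ⟨⟨?_, by simp⟩, by rw [← h, bimon_eq]⟩
      have hs : (List.ofFn I).SortedLT := List.sortedLT_ofFn_iff.2 hI
      refine List.sublist_of_subperm_of_pairwise (r := (· < ·)) (List.subperm_of_subset hs.nodup ?_) hs.pairwise hLs.pairwise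
      intro x hx
      rw [List.mem_ofFn] at hx
      obtain ⟨j, rfl⟩ := hx
      exact (hLm _).2 (bimon_bound c hc N ν hN I hI h j)
    · rintro ⟨⟨hJ, hlen⟩, h⟩
      have hs : J.SortedLT := (hLs.pairwise.sublist hJ).sortedLT
      have hof : List.ofFn (fun j : Fin c.length => J.get (j.cast hlen.symm)) = J := by
        apply List.ext_getElem
        · simp [hlen]
        · intro n h1 h2
          simp
      refine ⟨fun j => J.get (j.cast hlen.symm), ⟨?_, ?_⟩, hof⟩
      · rw [← List.sortedLT_ofFn_iff, hof]; exact hs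
      · rw [bimon_eq, hof, h]
  rw [e2, Set.ncard_coe_finset, List.toFinset_card_of_nodup
    ((List.nodup_sublistsLen _ hLs.nodup).filter _), truncG_eq, map_list_sum, List.map_map]
  generalize L.sublistsLen c.length = T
  induction T with
  | nil => simp
  | cons J T ih =>
    simp only [List.map_cons, List.sum_cons, ← ih, Function.comp, MvPowerSeries.coeff_monomial,
      List.filter_cons]
    split_ifs <;> simp_all [add_comm]

theorem ulw_cons (a : ℕ × ℕ) (d : List (ℕ × ℕ)) :
    UpperLeftWeak (a :: d) ↔ (d = [] → 0 < a.1) ∧ UpperLeftWeak d := by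
  cases d <;> simp [UpperLeftWeak, List.getLast?_cons_cons]

theorem qsh_ulw : ∀ c c' : List (ℕ × ℕ), ∀ d ∈ (qsh c c').support,
    (d = [] → c = [] ∧ c' = []) ∧ (UpperLeftWeak c → UpperLeftWeak c' → UpperLeftWeak d)
  | [], b, d, hd => by
    rw [qsh] at hd
    have := Finsupp.support_single_subset hd
    simp at this
    subst this
    simp
  | a :: a', [], d, hd => by
    rw [qsh] at hd
    have := Finsupp.support_single_subset hd
    simp at this
    subst this
    simp +contextual
  | a :: a', b :: b', d, hd => by
    classical
    rw [qsh] at hd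
    have h := Finsupp.support_add hd
    rw [Finset.mem_union] at h
    rcases h with h | h
    · have h := Finsupp.support_add h
      rw [Finset.mem_union] at h
      rcases h with h | h
      · obtain ⟨e, he, rfl⟩ := Finset.mem_image.1 (Finsupp.mapDomain_support h)
        have ih := qsh_ulw _ _ e he
        simp only [ulw_cons] at ih ⊢
        refine ⟨by simp, fun h1 h2 => ⟨fun h3 => ?_, ih.2 h1.2 h2⟩⟩
        simpa using (ih.1 h3).2
      · obtain ⟨e, he, rfl⟩ := Finset.mem_image.1 (Finsupp.mapDomain_support h)
        have ih := qsh_ulw _ _ e he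
        simp only [ulw_cons] at ih ⊢
        refine ⟨by simp, fun h1 h2 => ⟨fun h3 => ?_, ih.2 h1 h2.2⟩⟩
        simpa using (ih.1 h3).1
    · obtain ⟨e, he, rfl⟩ := Finset.mem_image.1 (Finsupp.mapDomain_support h)
      have ih := qsh_ulw _ _ e he
      simp only [ulw_cons] at ih ⊢
      refine ⟨by simp, fun h1 h2 => ⟨fun h3 => ?_, ih.2 h1.2 h2.2⟩⟩
      have := h1.1 (ih.1 h3).1
      simp only [Prod.fst_add]
      omega
termination_by u v => u.length + v.length

/-- For upper-left weak bicompositions (α;β), (α';β'), the power series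
M_{(α;β)}(X,Y) is well defined (every coefficient-count is finite), every bicomposition
occurring in the quasi-shuffle product (α;β)*(α';β') over ℕ×ℕ is again upper-left weak, and
M_{(α;β)}(X,Y) · M_{(α';β')}(X,Y) = M_{(α;β)*(α';β')}(X,Y) in ℚ[[X,Y]], where M is extended
ℚ-linearly. -/
theorem stmt2 (c c' : List (ℕ × ℕ))
    (hc : UpperLeftWeak c) (hc' : UpperLeftWeak c') :
    (∀ ν : (ℕ+ ⊕ ℕ+) →₀ ℕ,
      {I : Fin c.length → ℕ+ | StrictMono I ∧ bimon c I = ν}.Finite ∧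
      {I : Fin c'.length → ℕ+ | StrictMono I ∧ bimon c' I = ν}.Finite) ∧
    (∀ d ∈ (qsh c c').support, UpperLeftWeak d) ∧
    biM c * biM c' = (qsh c c').sum fun d q => q • biM d := by
  refine ⟨fun ν => ⟨bimon_finite c hc ν, bimon_finite c' hc' ν⟩,
    fun d hd => (qsh_ulw c c' d hd).2 hc hc', ?_⟩
  classical
  ext ν
  obtain ⟨N, hN⟩ := exists_bound ν
  have h := congrArg (MvPowerSeries.coeff ν) (trunc_mul ((Finset.Icc 1 N).sort (· ≤ ·)) c c')
  rw [truncL, Finsupp.linearCombination_apply, Finsupp.sum, map_sum,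
    MvPowerSeries.coeff_mul] at h
  rw [Finsupp.sum, map_sum, MvPowerSeries.coeff_mul]
  refine Eq.trans (Finset.sum_congr rfl fun p hp => ?_) (h.trans
    (Finset.sum_congr rfl fun d hd => ?_))
  · have hp := Finset.HasAntidiagonal.mem_antidiagonal.1 hp
    rw [coeff_biM_s2 c hc N p.1, coeff_biM_s2 c' hc' N p.2]
    · intro i hi
      apply hN
      rw [← hp, Finsupp.add_apply]
      omega
    · intro i hi
      apply hN
      rw [← hp, Finsupp.add_apply]
      omega
  · rw [map_smul, map_smul, coeff_biM_s2 d ((qsh_ulw c c' d hd).2 hc hc') N ν hN]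
end

section
/- Let (α;β) be a directed weak bicomposition of length k and let j with 1≤j≤k be such that α_{j+1}=⋯=α_k=0. Then for every real t≥0 and every z∈ℂ with Re z<0, one has the identity of formal power series φ(α;β)(t,z) = φ((α_1,…,α_{j−1},α_j);(β_1,…,β_{j−1},β_j+β_{j+1}+⋯+β_k))(t,z) · φ((0,…,0);(β_{j+1},…,β_k))(0,z), where the second factor has length k−j and equals 1 when j=k. -/
open Finset

/-- the regularization φ(α;β)(t,z) of a directed weak bicomposition (list of columns):
its coefficient at a monomial μ is the sum of exp(((i_1+t)β_1+⋯+(i_k+t)β_k)z) over all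
strictly increasing tuples I = (i_1 < ⋯ < i_k) with x_I^α = μ. -/
noncomputable def phiPS (c : List (ℕ × ℕ)) (t : ℝ) (z : ℂ) : MvPowerSeries ℕ+ ℂ :=
  fun μ => ∑' I : {I : Fin c.length → ℕ+ // StrictMono I ∧
      (∑ j, Finsupp.single (I j) (c.get j).1) = μ},
    Complex.exp ((∑ j, (((I.1 j : ℕ) : ℂ) + (t : ℂ)) * ((c.get j).2 : ℂ)) * z)

theorem phi_summable_aux (t : ℝ) (z : ℂ) (hz : z.re < 0) : ∀ (n : ℕ) (b : Fin n → ℕ),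
    (∀ i, 0 < b i) → Summable (fun I : Fin n → ℕ+ =>
      ‖Complex.exp ((∑ j, (((I j : ℕ) : ℂ) + (t : ℂ)) * (b j : ℂ)) * z)‖) := by
  intro n
  induction n with
  | zero => intro b _; exact Summable.of_finite
  | succ n ih =>
    intro b hb
    have h1 : Summable (fun i : ℕ+ =>
        ‖Complex.exp (((((i : ℕ) : ℂ) + (t : ℂ)) * (b 0 : ℂ)) * z)‖) := by
      have hr : Real.exp (b 0 * z.re) < 1 := by
        rw [Real.exp_lt_one_iff]
        have : (0 : ℝ) < b 0 := by exact_mod_cast hb 0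
        nlinarith
      have hg := ((summable_geometric_of_lt_one (Real.exp_pos _).le hr).comp_injective
        PNat.coe_injective).mul_left (Real.exp (t * b 0 * z.re))
      refine hg.congr fun i => ?_
      rw [Complex.norm_exp, Function.comp, ← Real.exp_nat_mul, ← Real.exp_add]
      congr 1
      have : ((((i : ℕ) : ℂ) + (t : ℂ)) * (b 0 : ℂ)) = (((((i : ℕ) : ℝ) + t) * (b 0 : ℝ) : ℝ) : ℂ) := by
        push_cast; rfl
      rw [this, Complex.re_ofReal_mul]
      ring
    have h2 := ih (fun i => b i.succ) (fun i => hb _)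
    have h3 := h1.mul_norm h2
    rw [← (Fin.consEquiv (fun _ => ℕ+)).summable_iff]
    refine h3.congr fun x => ?_
    simp only [Function.comp, Fin.consEquiv, Equiv.coe_fn_mk, Fin.sum_univ_succ, Fin.cons_zero,
      Fin.cons_succ, add_mul, Complex.exp_add, norm_mul]

noncomputable def phiAux (n : ℕ) (a b : Fin n → ℕ) (t : ℝ) (z : ℂ) (μ : ℕ+ →₀ ℕ) : ℂ :=
  ∑' I : {I : Fin n → ℕ+ // StrictMono I ∧ (∑ j, Finsupp.single (I j) (a j)) = μ},
    Complex.exp ((∑ j, (((I.1 j : ℕ) : ℂ) + (t : ℂ)) * (b j : ℂ)) * z)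

theorem phiPS_eq_aux (c : List (ℕ × ℕ)) (t : ℝ) (z : ℂ) (n : ℕ) (h : n = c.length)
    (a b : Fin n → ℕ) (ha : ∀ i, a i = (c.get (Fin.cast h i)).1)
    (hb : ∀ i, b i = (c.get (Fin.cast h i)).2) (μ : ℕ+ →₀ ℕ) :
    phiPS c t z μ = phiAux n a b t z μ := by
  subst h
  obtain rfl : a = fun i => (c.get i).1 := funext ha
  obtain rfl : b = fun i => (c.get i).2 := funext hb
  rfl

theorem phiAux_zero (n : ℕ) (b : Fin n → ℕ) (t : ℝ) (z : ℂ) (μ : ℕ+ →₀ ℕ) (hμ : μ ≠ 0) :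
    phiAux n (fun _ => 0) b t z μ = 0 := by
  unfold phiAux
  have : IsEmpty {I : Fin n → ℕ+ // StrictMono I ∧ (∑ j, Finsupp.single (I j) 0) = μ} := by
    refine ⟨fun I => hμ ?_⟩
    rw [← I.2.2]; simp
  exact tsum_empty

theorem append_strictMono (p m : ℕ) (I : Fin (p + 1) → ℕ+) (J : Fin m → ℕ+)
    (hI : StrictMono I) (hJ : StrictMono J) :
    StrictMono (Fin.append I (fun i => I (Fin.last p) + J i)) := by
  intro x y
  refine Fin.addCases (fun x => ?_) (fun x => ?_) x <;>
  refine Fin.addCases (fun y => ?_) (fun y => ?_) y <;> intro hxy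
  · simp only [Fin.append_left]
    exact hI hxy
  · simp only [Fin.append_left, Fin.append_right]
    exact (hI.monotone (Fin.le_last x)).trans_lt (PNat.lt_add_right _ _)
  · simp [Fin.lt_def] at hxy
    omega
  · simp only [Fin.append_right]
    have := hJ (show x < y from (Fin.natAdd_lt_natAdd_iff (p + 1)).1 hxy)
    gcongr

theorem phiAux_main (p m : ℕ) (a b : Fin (p + 1 + m) → ℕ) (hb : ∀ i, 0 < b i)
    (ha : ∀ i : Fin m, a (Fin.natAdd (p + 1) i) = 0) (t : ℝ) (z : ℂ) (hz : z.re < 0)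
    (μ : ℕ+ →₀ ℕ) :
    phiAux (p + 1 + m) a b t z μ =
      phiAux (p + 1) (fun i => a (Fin.castAdd m i))
        (fun i => b (Fin.castAdd m i) +
          if i = Fin.last p then ∑ l : Fin m, b (Fin.natAdd (p + 1) l) else 0) t z μ *
      phiAux m (fun _ => 0) (fun i => b (Fin.natAdd (p + 1) i)) 0 z 0 := by
  unfold phiAux
  rw [tsum_mul_tsum_of_summable_norm
    ((phi_summable_aux t z hz (p + 1) _ (fun i => Nat.add_pos_left (hb _) _)).comp_injective
      Subtype.val_injective)
    ((phi_summable_aux 0 z hz m _ (fun i => hb _)).comp_injective Subtype.val_injective)]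
  symm
  let F : ({I : Fin (p + 1) → ℕ+ // StrictMono I ∧
        (∑ j, Finsupp.single (I j) (a (Fin.castAdd m j))) = μ} ×
      {I : Fin m → ℕ+ // StrictMono I ∧ (∑ j, Finsupp.single (I j) 0) = (0 : ℕ+ →₀ ℕ)}) →
      {I : Fin (p + 1 + m) → ℕ+ // StrictMono I ∧ (∑ j, Finsupp.single (I j) (a j)) = μ} :=
    fun x => ⟨Fin.append x.1.1 (fun i => x.1.1 (Fin.last p) + x.2.1 i),
      append_strictMono p m _ _ x.1.2.1 x.2.2.1, by
        rw [Fin.sum_univ_add]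
        simp [ha, x.1.2.2]⟩
  have hF : Function.Bijective F := by
    constructor
    · rintro ⟨⟨I, hI⟩, ⟨J, hJ⟩⟩ ⟨⟨I', hI'⟩, ⟨J', hJ'⟩⟩ h
      have h := congrArg Subtype.val h
      simp only [F] at h
      have e1 : I = I' := by
        funext i
        simpa using congrFun h (Fin.castAdd m i)
      subst e1
      have e2 : J = J' := by
        funext i
        simpa using congrFun h (Fin.natAdd (p + 1) i)
      subst e2
      rfl
    · rintro ⟨K, hK, hK'⟩
      have hlt : ∀ i : Fin m, K (Fin.castAdd m (Fin.last p)) < K (Fin.natAdd (p + 1) i) := by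
        intro i
        apply hK
        simp [Fin.lt_def]; omega
      refine ⟨⟨⟨fun i => K (Fin.castAdd m i), fun x y hxy => hK hxy,
        ?_⟩, ⟨fun i => K (Fin.natAdd (p + 1) i) - K (Fin.castAdd m (Fin.last p)), ?_, by simp⟩⟩, ?_⟩
      · rw [← hK', Fin.sum_univ_add (a := p + 1) (b := m)]
        simp [ha]
      · intro x y hxy
        have h1 := PNat.add_sub_of_lt (hlt x)
        have h2 := PNat.add_sub_of_lt (hlt y)
        have h3 : K (Fin.natAdd (p + 1) x) < K (Fin.natAdd (p + 1) y) :=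
          hK ((Fin.natAdd_lt_natAdd_iff (p + 1)).2 hxy)
        rw [← h1, ← h2] at h3
        exact lt_of_add_lt_add_left h3
      · apply Subtype.ext
        funext x
        refine Fin.addCases (fun x => ?_) (fun x => ?_) x
        · simp [F]
        · simp only [F, Fin.append_right]
          exact PNat.add_sub_of_lt (hlt x)
  rw [← (Equiv.ofBijective F hF).tsum_eq]
  refine tsum_congr fun x => ?_
  rw [← Complex.exp_add, ← add_mul]
  congr 2
  simp only [Equiv.ofBijective_apply, F]
  rw [Fin.sum_univ_add (a := p + 1) (b := m)]
  simp only [Fin.append_left, Fin.append_right, Nat.cast_add, PNat.add_coe, mul_add,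
    Finset.sum_add_distrib, Nat.cast_ite, mul_ite, Nat.cast_zero, mul_zero,
    Finset.sum_ite_eq', Finset.mem_univ, if_true, Complex.ofReal_zero, add_zero]
  rw [add_assoc]
  congr 1
  push_cast
  rw [Finset.mul_sum, ← Finset.sum_add_distrib]
  refine Finset.sum_congr rfl fun i _ => ?_
  ring

/-- Let (α;β) be a directed weak bicomposition (given as its list of columns c,
with all second entries positive) of length k, and let 1 ≤ j ≤ k be such that
α_{j+1} = ⋯ = α_k = 0. Then for every real t ≥ 0 and z ∈ ℂ with Re z < 0,
φ(α;β)(t,z) = φ((α_1,…,α_j); (β_1,…,β_{j-1}, β_j+β_{j+1}+⋯+β_k))(t,z)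
                · φ((0,…,0); (β_{j+1},…,β_k))(0,z). -/
theorem stmt5 (c : List (ℕ × ℕ)) (hc : ∀ p ∈ c, 0 < p.2)
    (j : ℕ) (hj1 : 1 ≤ j) (hjk : j ≤ c.length)
    (hzero : ∀ i : Fin c.length, j ≤ (i : ℕ) → (c.get i).1 = 0)
    (t : ℝ) (ht : 0 ≤ t) (z : ℂ) (hz : z.re < 0) :
    phiPS c t z =
      phiPS (c.take (j - 1) ++
          [((c.get ⟨j - 1, by omega⟩).1, ((c.drop (j - 1)).map Prod.snd).sum)]) t z *
      phiPS ((c.drop j).map fun p => (0, p.2)) 0 z := by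
  obtain ⟨p, rfl⟩ : ∃ p, j = p + 1 := ⟨j - 1, by omega⟩
  obtain ⟨m, hm⟩ := Nat.exists_eq_add_of_le hjk
  have hlt : ∀ i : Fin (p + 1 + m), (i : ℕ) < c.length := fun i => by have := i.2; omega
  have hsum : ((c.drop (p + 1)).map Prod.snd).sum =
      ∑ l : Fin m, (c.get ⟨p + 1 + l, by have := l.2; omega⟩).2 := by
    have e : (c.drop (p + 1)).map Prod.snd =
        List.ofFn fun l : Fin m => (c.get ⟨p + 1 + l, by have := l.2; omega⟩).2 := by
      apply List.ext_getElem
      · simp [hm]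
      · intro i h1 h2
        simp
    rw [e, List.sum_ofFn]
  have hdrop : ((c.drop p).map Prod.snd).sum = (c.get ⟨p, by omega⟩).2 +
      ∑ l : Fin m, (c.get ⟨p + 1 + l, by have := l.2; omega⟩).2 := by
    rw [← hsum, List.drop_eq_getElem_cons (by omega : p < c.length), List.map_cons, List.sum_cons]
    rfl
  funext μ
  have h0 := phiPS_eq_aux c t z (p + 1 + m) hm.symm (fun i => (c.get ⟨i, hlt i⟩).1)
    (fun i => (c.get ⟨i, hlt i⟩).2) (fun i => rfl) (fun i => rfl) μ
  have h2 : ∀ ν, phiPS ((c.drop (p + 1)).map fun q => (0, q.2)) 0 z ν = phiAux m (fun _ => 0)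
      (fun i => (c.get ⟨p + 1 + i, by have := i.2; omega⟩).2) 0 z ν := fun ν =>
    phiPS_eq_aux _ 0 z m (by simp [hm]) _ _ (fun i => by simp) (fun i => by simp) ν
  have h1 := phiPS_eq_aux (c.take (p + 1 - 1) ++
          [((c.get ⟨p + 1 - 1, by omega⟩).1, ((c.drop (p + 1 - 1)).map Prod.snd).sum)]) t z (p + 1)
    (by simp; omega) (fun i => (c.get ⟨i, by have := i.2; omega⟩).1)
    (fun i => (c.get ⟨i, by have := i.2; omega⟩).2 + if i = Fin.last p then
      ∑ l : Fin m, (c.get ⟨p + 1 + l, by have := l.2; omega⟩).2 else 0)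
    (fun i => by
      refine Fin.lastCases ?_ (fun i => ?_) i
      · simp
      · have : (i : ℕ) < c.length := by have := i.2; omega
        simp [this])
    (fun i => by
      refine Fin.lastCases ?_ (fun i => ?_) i
      · simp only [List.map_drop, List.get_eq_getElem] at hdrop
        simp [hdrop]
      · have : (i : ℕ) < c.length := by have := i.2; omega
        simp [this]) μ
  have hmain := phiAux_main p m (fun i => (c.get ⟨i, hlt i⟩).1)
    (fun i => (c.get ⟨i, hlt i⟩).2) (fun i => hc _ (List.get_mem _ _))
    (fun i => hzero _ (by simp)) t z hz μ
  rw [h0, hmain]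
  have hcoe : ∀ f : MvPowerSeries ℕ+ ℂ, f μ = MvPowerSeries.coeff μ f := fun _ => rfl
  refine Eq.trans ?_ (hcoe _).symm
  classical
  rw [MvPowerSeries.coeff_mul, Finset.sum_eq_single (μ, 0)]
  · change _ = phiPS _ t z μ * phiPS _ 0 z 0
    rw [h1, h2]
    rfl
  · rintro ⟨u, v⟩ huv hne
    have hv : v ≠ 0 := by
      rintro rfl
      simp at huv
      exact hne (by rw [huv])
    change phiPS _ t z u * phiPS _ 0 z v = 0
    rw [h2, phiAux_zero _ _ _ _ _ hv, mul_zero]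
  · intro h
    simp at h
end

section
/- Let (α;β) and (α';β') be directed weak bicompositions. Then every bicomposition occurring in the quasi-shuffle product (α;β)*(α';β'), taken over the monoid ℕ×ℕ with componentwise addition and viewing a bicomposition as the list of its columns, is again a directed weak bicomposition (its second rows have positive entries), and for every real t≥0 and every z∈ℂ with Re z<0, φ(α;β)(t,z) · φ(α';β')(t,z) = φ((α;β)*(α';β'))(t,z) as formal power series over ℂ, where φ(·)(t,z) is extended ℚ-linearly to linear combinations of directed weak bicompositions. -/
open Finset

theorem A (a b : List (ℕ×ℕ)) (ha : ∀ p ∈ a, 0 < p.2) (hb : ∀ p ∈ b, 0 < p.2) : ∀ d ∈ (qsh a b).support, ∀ p ∈ d, 0 < p.2 := by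
  induction a, b using qsh.induct with
  | case1 b => 
    rw [qsh]; intro d hd p hp
    have := Finsupp.support_single_subset hd
    simp only [Finset.mem_singleton] at this; subst this; exact hb p hp
  | case2 a a' => 
    rw [qsh]; intro d hd p hp
    have := Finsupp.support_single_subset hd
    simp only [Finset.mem_singleton] at this; subst this; exact ha p hp
  | case3 a a' b b' h1 h2 h3 =>
    classical
    rw [qsh]; intro d hd
    simp only [List.forall_mem_cons] at *
    rcases Finset.mem_union.1 (Finsupp.support_add hd) with hd | hd
    · rcases Finset.mem_union.1 (Finsupp.support_add hd) with hd | hd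
      all_goals
        obtain ⟨e, he, rfl⟩ := Finset.mem_image.1 (Finsupp.mapDomain_support hd)
        simp only [List.forall_mem_cons]
      · exact ⟨ha.1, h1 ha.2 hb e he⟩
      · exact ⟨hb.1, h2 ha hb.2 e he⟩
    · obtain ⟨e, he, rfl⟩ := Finset.mem_image.1 (Finsupp.mapDomain_support hd)
      simp only [List.forall_mem_cons]
      exact ⟨Nat.add_pos_left ha.1 _, h3 ha.2 hb.2 e he⟩

noncomputable def MM {ι A R : Type} [CommRing R] (w : ι → A → R) : List ι → List A → R
  | _, [] => 1
  | [], _ :: _ => 0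
  | i :: S, a :: c => w i a * MM w S c + MM w S (a :: c)

theorem MM_mul {ι A R : Type} [AddCommMonoid A] [CommRing R] [Module ℚ R] (w : ι → A → R)
    (hw : ∀ i a b, w i (a + b) = w i a * w i b) (S : List ι) (c c' : List A) :
    MM w S c * MM w S c' = (qsh c c').sum fun d q => q • MM w S d := by
  have key : ∀ (i : ι) (S : List ι) (a : A) (f : List A →₀ ℚ),
    ((f.mapDomain (a :: ·)).sum fun d q => q • MM w (i :: S) d) =
      w i a * (f.sum fun d q => q • MM w S d) + (f.mapDomain (a :: ·)).sum fun d q => q • MM w S d := by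
    intro i S a f
    rw [Finsupp.sum_mapDomain_index (by simp) (by intros; rw [add_smul]),
      Finsupp.sum_mapDomain_index (by simp) (by intros; rw [add_smul]), Finsupp.mul_sum, ← Finsupp.sum_add]
    refine Finsupp.sum_congr fun d _ => ?_
    rw [MM, smul_add, mul_smul_comm]
  have key0 : ∀ (a : A) (f : List A →₀ ℚ),
    ((f.mapDomain (a :: ·)).sum fun d q => q • MM w [] d) = 0 := by
    intro a f
    rw [Finsupp.sum_mapDomain_index (by simp) (by intros; rw [add_smul])]
    simp [MM, Finsupp.sum]
  have add : ∀ (S : List ι) (f g : List A →₀ ℚ), ((f + g).sum fun d q => q • MM w S d) = 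
      (f.sum fun d q => q • MM w S d) + (g.sum fun d q => q • MM w S d) := by
    intro S f g
    exact Finsupp.sum_add_index' (by simp) (by intros; rw [add_smul])
  induction S generalizing c c' with
  | nil =>
    cases c with
    | nil => simp [qsh, MM]
    | cons a c => 
      cases c' with
      | nil => simp [qsh, MM]
      | cons b c' => 
        rw [qsh, add, add, key0, key0, key0]; simp [MM]
  | cons i S ih =>
    cases c with
    | nil => simp [qsh, MM]
    | cons a c => 
      cases c' with
      | nil => simp [qsh, MM]
      | cons b c' => 
        have h := ih (a :: c) (b :: c')
        rw [qsh, add, add] at h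
        rw [qsh, add, add, key, key, key, ← ih, ← ih, ← ih, hw, MM, MM]
        linear_combination h

theorem MM_eq {ι A R : Type} [CommRing R] (w : ι → A → R) (S : List ι) (c : List A) :
    MM w S c = ((S.sublistsLen c.length).map fun l => (List.zipWith w l c).prod).sum := by
  induction S generalizing c with
  | nil => cases c <;> simp [MM]
  | cons i S ih => 
    cases c with
    | nil => simp [MM]
    | cons a c => 
      simp only [MM, List.length_cons, List.sublistsLen_succ_cons, List.map_append, List.sum_append, List.map_map, ih]
      rw [add_comm, ← List.sum_map_mul_left]
      simp [Function.comp_def]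

theorem MM_fin {ι A R : Type} [LinearOrder ι] [CommRing R] (w : ι → A → R) (s : Finset ι) (c : List A) :
    MM w (s.sort (· ≤ ·)) c = ∑ I ∈ Fintype.piFinset (fun _ : Fin c.length => s) with StrictMono I,
      ∏ j, w (I j) (c.get j) := by
  classical
  rw [MM_eq, ← List.sum_toFinset _ (List.nodup_sublistsLen _ (s.sort_nodup _))]
  symm
  refine Finset.sum_bij (fun I _ => List.ofFn I) ?_ ?_ ?_ ?_
  · intro I hI
    simp only [Finset.mem_filter, Fintype.mem_piFinset] at hI
    simp only [List.mem_toFinset, List.mem_sublistsLen, List.length_ofFn, and_true]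
    have h1 := List.sortedLT_ofFn_iff.2 hI.2
    refine List.sublist_of_subperm_of_sortedLE ?_ h1.sortedLE s.sortedLT_sort.sortedLE
    refine h1.nodup.subperm ?_
    intro x hx
    obtain ⟨j, rfl⟩ := (List.mem_ofFn' _ _).1 hx
    simpa using hI.1 j
  · intro I _ J _ h
    exact List.ofFn_injective h
  · intro l hl
    simp only [List.mem_toFinset, List.mem_sublistsLen] at hl
    obtain ⟨hl, hk⟩ := hl
    refine ⟨fun j => l.get (j.cast hk.symm), ?_, ?_⟩
    · simp only [Finset.mem_filter, Fintype.mem_piFinset]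
      refine ⟨fun j => ?_, ?_⟩
      · have := hl.subset (List.get_mem l (j.cast hk.symm))
        simpa using this
      · have : l.SortedLT := (s.sortedLT_sort.pairwise.sublist hl).sortedLT
        intro a b hab
        exact this.strictMono_get hab
    · apply List.ext_get
      · simp [hk]
      · intro n h1 h2; simp
  · intro I hI
    have : List.zipWith w (List.ofFn I) c = List.ofFn fun j => w (I j) (c.get j) := by
      apply List.ext_get
      · simp
      · intro n h1 h2; simp
    rw [this, List.prod_ofFn]

/-- weight -/
noncomputable def wt (t : ℝ) (z : ℂ) (i : ℕ+) (a : ℕ × ℕ) : MvPowerSeries ℕ+ ℂ :=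
  MvPowerSeries.monomial (Finsupp.single i a.1) (Complex.exp ((((i : ℕ) : ℂ) + (t : ℂ)) * (a.2 : ℂ) * z))

theorem wt_add (t : ℝ) (z : ℂ) (i : ℕ+) (a b : ℕ × ℕ) : wt t z i (a + b) = wt t z i a * wt t z i b := by
  unfold wt
  rw [MvPowerSeries.monomial_mul_monomial, ← Finsupp.single_add, ← Complex.exp_add]
  congr 2
  simp only [Prod.snd_add, Nat.cast_add]; ring

theorem summable_aux (k : ℕ) (f : ℕ+ → ℝ) (hf0 : ∀ i, 0 ≤ f i) (hf : Summable f) :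
    Summable fun I : Fin k → ℕ+ => ∏ j, f (I j) := by
  classical
  refine summable_of_sum_le (c := ∏ _j : Fin k, ∑' i, f i) (fun I => Finset.prod_nonneg fun _ _ => hf0 _) fun u => ?_
  calc ∑ I ∈ u, ∏ j, f (I j) ≤ ∑ I ∈ Fintype.piFinset (fun j : Fin k => u.image (fun I => I j)), ∏ j, f (I j) := by
        refine Finset.sum_le_sum_of_subset_of_nonneg ?_ fun I _ _ => Finset.prod_nonneg fun _ _ => hf0 _
        intro I hI
        simp only [Fintype.mem_piFinset]
        exact fun j => Finset.mem_image_of_mem _ hI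
    _ = ∏ j : Fin k, ∑ i ∈ u.image (fun I => I j), f i := by rw [Finset.prod_univ_sum]
    _ ≤ _ := Finset.prod_le_prod (fun _ _ => Finset.sum_nonneg fun _ _ => hf0 _)
        fun j _ => hf.sum_le_tsum _ fun _ _ => hf0 _

theorem summable_geo (z : ℂ) (hz : z.re < 0) : Summable fun i : ℕ+ => Real.exp ((i : ℕ) * z.re) := by
  have : Summable fun i : ℕ => Real.exp ((i : ℕ) * z.re) := by
    simp_rw [Real.exp_nat_mul]
    exact summable_geometric_of_lt_one (Real.exp_pos _).le (by simpa using hz)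
  exact this.comp_injective PNat.coe_injective

theorem tendsto_MM (c : List (ℕ × ℕ)) (hc : ∀ p ∈ c, 0 < p.2) 
    (t : ℝ) (ht : 0 ≤ t) (z : ℂ) (hz : z.re < 0) (μ : ℕ+ →₀ ℕ) :
    Filter.Tendsto (fun s : Finset ℕ+ => MvPowerSeries.coeff μ (MM (wt t z) (s.sort (· ≤ ·)) c)) Filter.atTop
      (nhds (MvPowerSeries.coeff μ (phiPS c t z))) := by
  classical
  set E : (Fin c.length → ℕ+) → ℂ := fun I => 
    Complex.exp ((∑ j, (((I j : ℕ) : ℂ) + (t : ℂ)) * ((c.get j).2 : ℂ)) * z) with hE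
  set T : Set (Fin c.length → ℕ+) := {I | StrictMono I ∧ (∑ j, Finsupp.single (I j) (c.get j).1) = μ} with hT
  have h1 : MvPowerSeries.coeff μ (phiPS c t z) = ∑' I, T.indicator E I := by
    rw [← _root_.tsum_subtype]; rfl
  have hs : Summable (T.indicator E) := by
    apply Summable.indicator
    refine Summable.of_norm_bounded (summable_aux c.length _ (fun _ => (Real.exp_pos _).le) (summable_geo z hz)) fun I => ?_
    rw [hE, Complex.norm_exp, ← Real.exp_sum, Real.exp_le_exp]
    have : (∑ j, (((I j : ℕ) : ℂ) + (t : ℂ)) * ((c.get j).2 : ℂ)) = ((∑ j, (((I j : ℕ) : ℝ) + t) * ((c.get j).2 : ℝ) : ℝ) : ℂ) := by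
      push_cast; rfl
    rw [this, Complex.re_ofReal_mul, ← Finset.sum_mul]
    refine mul_le_mul_of_nonpos_right (Finset.sum_le_sum fun j _ => ?_) hz.le
    have h2 : (1 : ℝ) ≤ ((c.get j).2 : ℝ) := by exact_mod_cast hc _ (List.get_mem c j)
    have h3 : (0 : ℝ) ≤ ((I j : ℕ) : ℝ) := Nat.cast_nonneg _
    nlinarith
  have h2 : ∀ s : Finset ℕ+, MvPowerSeries.coeff μ (MM (wt t z) (s.sort (· ≤ ·)) c) = 
      ∑ I ∈ Fintype.piFinset (fun _ : Fin c.length => s), T.indicator E I := by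
    intro s
    rw [MM_fin, map_sum, Finset.sum_filter]
    refine Finset.sum_congr rfl fun I _ => ?_
    simp only [wt, MvPowerSeries.prod_monomial, MvPowerSeries.coeff_monomial, ← Complex.exp_sum, ← Finset.sum_mul]
    simp only [Set.indicator, hT, Set.mem_ofPred_eq, hE, eq_comm (a := μ)]
    rw [ite_and]
  simp_rw [h1, h2]
  refine hs.hasSum.comp (Filter.tendsto_atTop_finset_of_monotone ?_ ?_)
  · intro s s' h
    exact Fintype.piFinset_subset _ _ fun _ => h
  · intro I
    exact ⟨Finset.univ.image I, by simp⟩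

/-- For directed weak bicompositions (α;β), (α';β') (lists of columns with
positive second entries), every bicomposition occurring in the quasi-shuffle product
(α;β)*(α';β') over the monoid ℕ×ℕ is again a directed weak bicomposition, and for every
real t ≥ 0 and z ∈ ℂ with Re z < 0,
φ(α;β)(t,z) · φ(α';β')(t,z) = φ((α;β)*(α';β'))(t,z), where φ(·)(t,z) is extended
ℚ-linearly. -/
theorem stmt6 (c c' : List (ℕ × ℕ)) (hc : ∀ p ∈ c, 0 < p.2) (hc' : ∀ p ∈ c', 0 < p.2)
    (t : ℝ) (ht : 0 ≤ t) (z : ℂ) (hz : z.re < 0) :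
    (∀ d ∈ (qsh c c').support, ∀ p ∈ d, 0 < p.2) ∧
    phiPS c t z * phiPS c' t z = (qsh c c').sum fun d q => q • phiPS d t z := by
  classical
  have hA := A c c' hc hc'
  refine ⟨hA, ?_⟩
  ext μ
  have h1 : Filter.Tendsto (fun s : Finset ℕ+ => MvPowerSeries.coeff μ
      (MM (wt t z) (s.sort (· ≤ ·)) c * MM (wt t z) (s.sort (· ≤ ·)) c')) Filter.atTop
      (nhds (MvPowerSeries.coeff μ (phiPS c t z * phiPS c' t z))) := by
    simp_rw [MvPowerSeries.coeff_mul]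
    exact tendsto_finsetSum _ fun p _ =>
      (tendsto_MM c hc t ht z hz _).mul (tendsto_MM c' hc' t ht z hz _)
  refine tendsto_nhds_unique h1 ?_
  simp_rw [MM_mul (wt t z) (wt_add t z), Finsupp.sum, map_sum]
  refine tendsto_finsetSum _ fun d hd => ?_
  exact (tendsto_MM d (hA d hd) t ht z hz μ).const_smul ((qsh c c') d)
end

section
/- The ℚ-linear span in ℚ[[X]] of the Stirling left weak quasisymmetric functions M̂_{(α;β)}, taken over all upper-left weak bicompositions (α;β), equals the ℚ-linear span of the monomial left weak quasisymmetric functions M_α, taken over all left weak compositions α. -/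
open Finset

/-- a left weak composition: empty or last entry positive -/
def LeftWeak (l : List ℕ) : Prop := ∀ a : ℕ, l.getLast? = some a → 0 < a

/-- the monomial (left weak) quasisymmetric function M_α of a weak composition α, as a formal
power series in ℚ[[X]]: its coefficient at a monomial μ is the number of strictly increasing
tuples I with x_I^α = μ (`Set.ncard` takes the value 0 on infinite sets). -/
noncomputable def Mqs (α : List ℕ) : MvPowerSeries ℕ+ ℚ :=
  fun μ => (Set.ncard {I : Fin α.length → ℕ+ | StrictMono I ∧
    (∑ j, Finsupp.single (I j) (α.get j)) = μ} : ℚ)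

/-- the Stirling left weak quasisymmetric function M̂_{(α;β)} of a bicomposition (list of
columns): its coefficient at a monomial μ is the (finite, for upper-left weak bicompositions)
sum of I^β over all strictly increasing tuples I with x_I^α = μ. -/
noncomputable def stirM (c : List (ℕ × ℕ)) : MvPowerSeries ℕ+ ℚ :=
  fun μ => ∑ᶠ I ∈ {I : Fin c.length → ℕ+ | StrictMono I ∧
      (∑ j, Finsupp.single (I j) (c.get j).1) = μ},
    ∏ j, (((I j : ℕ) : ℚ) ^ (c.get j).2)

namespace StirAux

abbrev R := MvPowerSeries ℕ+ ℚ

/-- strictly increasing tuples with entries at most N -/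
noncomputable def E : (k : ℕ) → ℕ → Finset (Fin k → ℕ+)
  | 0, _ => {Fin.elim0}
  | k + 1, N => by
      classical
      exact (range N).biUnion fun i =>
        (E k i).image fun I => (Fin.snoc I i.succPNat : Fin (k + 1) → ℕ+)

theorem mem_E : ∀ (k N : ℕ) (I : Fin k → ℕ+),
    I ∈ E k N ↔ StrictMono I ∧ ∀ j, (I j : ℕ) ≤ N
  | 0, N, I => by
      have : I = Fin.elim0 := Subsingleton.elim _ _
      simp only [E, this, mem_singleton, true_iff]
      exact ⟨fun i => i.elim0, fun i => i.elim0⟩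
  | k + 1, N, I => by
      simp only [E, mem_biUnion, mem_range, mem_image]
      constructor
      · rintro ⟨i, hi, J, hJ, rfl⟩
        rw [mem_E k i J] at hJ
        obtain ⟨h1, h2⟩ := hJ
        constructor
        · intro a b hab
          induction b using Fin.lastCases with
          | last =>
            induction a using Fin.lastCases with
            | last => exact absurd hab (lt_irrefl _)
            | cast a =>
              simp only [Fin.snoc_castSucc, Fin.snoc_last]
              rw [← PNat.coe_lt_coe]
              have := h2 a
              simp only [Nat.succPNat_coe]
              omega
          | cast b =>
            induction a using Fin.lastCases with
            | last => exact absurd hab (not_lt.mpr (Fin.le_last _))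
            | cast a =>
              simp only [Fin.snoc_castSucc]
              exact h1 (Fin.castSucc_lt_castSucc_iff.mp hab)
        · intro j
          induction j using Fin.lastCases with
          | last => simp only [Fin.snoc_last, Nat.succPNat_coe]; omega
          | cast j =>
            simp only [Fin.snoc_castSucc]
            have := h2 j
            omega
      · rintro ⟨h1, h2⟩
        have hpos := (I (Fin.last k)).pos
        refine ⟨(I (Fin.last k) : ℕ) - 1, ?_, Fin.init I, ?_, ?_⟩
        · have := h2 (Fin.last k)
          omega
        · rw [mem_E]
          refine ⟨fun a b hab => h1 (Fin.castSucc_lt_castSucc_iff.mpr hab), fun j => ?_⟩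
          have : I j.castSucc < I (Fin.last k) := h1 (Fin.castSucc_lt_last j)
          rw [← PNat.coe_lt_coe] at this
          simp only [Fin.init]
          omega
        · have : ((I (Fin.last k) : ℕ) - 1).succPNat = I (Fin.last k) := by
            apply PNat.eq
            simp only [Nat.succPNat_coe]
            omega
          rw [this, Fin.snoc_init_self]

/-- truncated Stirling function -/
noncomputable def T (k : ℕ) (c : Fin k → ℕ × ℕ) (N : ℕ) : R :=
  ∑ I ∈ E k N, MvPowerSeries.monomial (∑ j, Finsupp.single (I j) (c j).1)
    (∏ j, (((I j : ℕ) : ℚ) ^ (c j).2))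

noncomputable def L (a : ℕ) : (ℕ → R) →ₗ[ℚ] (ℕ → R) where
  toFun F N := ∑ i ∈ range N,
    MvPowerSeries.monomial (Finsupp.single i.succPNat a) (1 : ℚ) * F i
  map_add' F G := by
    funext N
    simp only [Pi.add_apply, mul_add, sum_add_distrib]
  map_smul' r F := by
    funext N
    simp only [Pi.smul_apply, mul_smul_comm, smul_sum, RingHom.id_apply]

theorem L_apply (a : ℕ) (F : ℕ → R) (N : ℕ) : L a F N = ∑ i ∈ range N,
    MvPowerSeries.monomial (Finsupp.single i.succPNat a) (1 : ℚ) * F i := rfl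

noncomputable def D : (ℕ → R) →ₗ[ℚ] (ℕ → R) where
  toFun F N := (N : ℚ) • F N
  map_add' F G := by
    funext N
    simp only [Pi.add_apply, smul_add]
  map_smul' r F := by
    funext N
    simp only [Pi.smul_apply, RingHom.id_apply, smul_comm r]

theorem D_apply (F : ℕ → R) (N : ℕ) : D F N = (N : ℚ) • F N := rfl

theorem T_succ (k : ℕ) (c : Fin (k + 1) → ℕ × ℕ) :
    T (k + 1) c = L (c (Fin.last k)).1
      (fun i => ((i : ℚ) + 1) ^ (c (Fin.last k)).2 • T k (Fin.init c) i) := by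
  classical
  funext N
  rw [L_apply, T]
  simp only [E]
  rw [sum_biUnion]
  · refine sum_congr rfl fun i _ => ?_
    rw [sum_image]
    · rw [T, smul_sum, mul_sum]
      refine sum_congr rfl fun I _ => ?_
      rw [mul_smul_comm, MvPowerSeries.monomial_mul_monomial, ← map_smul]
      simp only [Fin.sum_univ_castSucc, Fin.prod_univ_castSucc, Fin.snoc_castSucc, Fin.snoc_last,
        Fin.init, Nat.succPNat_coe, smul_eq_mul, one_mul]
      rw [add_comm, mul_comm]
      push_cast
      rfl
    · intro I _ J _ h
      have := congrArg (Fin.init (α := fun _ => ℕ+)) h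
      simpa using this
  · intro i _ j _ hij
    rw [Function.onFun, disjoint_left]
    intro I h1 h2
    simp only [mem_image] at h1 h2
    obtain ⟨I1, _, rfl⟩ := h1
    obtain ⟨I2, _, h⟩ := h2
    have := congrFun h (Fin.last k)
    simp only [Fin.snoc_last] at this
    exact hij (Nat.succPNat_injective this.symm)

theorem D_L (a : ℕ) (F : ℕ → R) : D (L a F) = L 0 (L a F) + L a (D F) + L a F := by
  funext N
  induction N with
  | zero => simp [D_apply, L_apply]
  | succ n ih =>
    simp only [Pi.add_apply, D_apply] at ih ⊢
    have hs : ∀ b G, L b G (n + 1) = L b G n +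
        MvPowerSeries.monomial (Finsupp.single n.succPNat b) (1 : ℚ) * G n := fun b G => by
      simp only [L_apply, sum_range_succ]
    rw [hs 0, hs a, hs a]
    have h1 : (MvPowerSeries.monomial (Finsupp.single n.succPNat 0) (1 : ℚ) : R) = 1 := by
      simp
    rw [h1, one_mul, D_apply, mul_smul_comm]
    push_cast
    rw [add_smul, one_smul, smul_add, ih]
    abel

noncomputable def W (s : Σ k, Fin k → ℕ) : ℕ → R := T s.1 (fun j => (s.2 j, 0))

noncomputable def A : Submodule ℚ (ℕ → R) := Submodule.span ℚ (Set.range W)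

theorem L_W (a k : ℕ) (w : Fin k → ℕ) : L a (W ⟨k, w⟩) =
    W ⟨k + 1, (Fin.snoc w a : Fin (k + 1) → ℕ)⟩ := by
  simp only [W]
  rw [T_succ]
  have h : (Fin.init fun j => ((Fin.snoc w a : Fin (k + 1) → ℕ) j, 0)) =
      fun j : Fin k => (w j, 0) := by
    funext j
    simp only [Fin.init, Fin.snoc_castSucc]
  simp only [Fin.snoc_last, pow_zero, one_smul]
  exact congrArg (fun c => L a (T k c)) h.symm

theorem L_mem (a : ℕ) {F : ℕ → R} (hF : F ∈ A) : L a F ∈ A := by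
  have : A ≤ A.comap (L a) := by
    refine Submodule.span_le.mpr ?_
    rintro _ ⟨⟨k, w⟩, rfl⟩
    change L a _ ∈ A
    rw [L_W]
    exact Submodule.subset_span ⟨_, rfl⟩
  exact this hF

theorem D_W : ∀ (k : ℕ) (w : Fin k → ℕ), D (W ⟨k, w⟩) ∈ A
  | 0, w => by
      have : D (W ⟨0, w⟩) = L 0 (W ⟨0, w⟩) := by
        funext N
        simp [D_apply, L_apply, W, T, E, Nat.cast_smul_eq_nsmul]
      rw [this]
      exact L_mem _ (Submodule.subset_span ⟨_, rfl⟩)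
  | k + 1, w => by
      have h : W ⟨k + 1, w⟩ = L (w (Fin.last k)) (W ⟨k, Fin.init w⟩) := by
        rw [L_W, Fin.snoc_init_self]
      have hA : W ⟨k, Fin.init w⟩ ∈ A := Submodule.subset_span ⟨_, rfl⟩
      rw [h, D_L]
      exact A.add_mem (A.add_mem (L_mem _ (L_mem _ hA)) (L_mem _ (D_W k _))) (L_mem _ hA)

theorem D_mem {F : ℕ → R} (hF : F ∈ A) : D F ∈ A := by
  have : A ≤ A.comap D := by
    refine Submodule.span_le.mpr ?_
    rintro _ ⟨⟨k, w⟩, rfl⟩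
    exact D_W k w
  exact this hF

theorem pow_mem {F : ℕ → R} (hF : F ∈ A) (b : ℕ) :
    (fun i : ℕ => ((i : ℚ) + 1) ^ b • F i) ∈ A := by
  induction b with
  | zero => simpa using hF
  | succ b ih =>
    convert A.add_mem (D_mem ih) ih using 1
    funext i
    simp only [Pi.add_apply, D_apply]
    rw [pow_succ', mul_smul, add_smul, one_smul]

theorem T_mem : ∀ (k : ℕ) (c : Fin k → ℕ × ℕ), T k c ∈ A
  | 0, c => Submodule.subset_span ⟨⟨0, Fin.elim0⟩, by
      funext N
      simp [W, T]⟩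
  | k + 1, c => by
      rw [T_succ]
      exact L_mem _ (pow_mem (T_mem k _) _)

noncomputable def stirF (k : ℕ) (c : Fin k → ℕ × ℕ) : R :=
  fun μ => ∑ᶠ I ∈ {I : Fin k → ℕ+ | StrictMono I ∧
      (∑ j, Finsupp.single (I j) (c j).1) = μ},
    ∏ j, (((I j : ℕ) : ℚ) ^ (c j).2)

/-- eventual coefficientwise convergence -/
def Lim (F : ℕ → R) (s : R) : Prop := ∀ μ : ℕ+ →₀ ℕ, ∀ᶠ N in Filter.atTop, F N μ = s μ

theorem Lim.unique {F : ℕ → R} {s t : R} (h1 : Lim F s) (h2 : Lim F t) : s = t := by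
  funext μ
  obtain ⟨N, h, h'⟩ := ((h1 μ).and (h2 μ)).exists
  exact h.symm.trans h'

theorem lim_T (k : ℕ) (c : Fin k → ℕ × ℕ) (hc : ∀ h : 0 < k, 0 < (c ⟨k - 1, by omega⟩).1) :
    Lim (T k c) (stirF k c) := by
  classical
  intro μ
  filter_upwards [Filter.eventually_ge_atTop (μ.support.sup fun i => (i : ℕ))] with N hN
  have key : {I : Fin k → ℕ+ | StrictMono I ∧ (∑ j, Finsupp.single (I j) (c j).1) = μ} =
      ↑((E k N).filter fun I => (∑ j, Finsupp.single (I j) (c j).1) = μ) := by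
    ext I
    simp only [Set.mem_ofPred_eq, coe_filter, mem_E]
    constructor
    · rintro ⟨h1, h2⟩
      refine ⟨⟨h1, fun j => ?_⟩, h2⟩
      have hk : 0 < k := j.pos
      have hl : I ⟨k - 1, by omega⟩ ∈ μ.support := by
        rw [Finsupp.mem_support_iff, ← h2, Finsupp.finsetSum_apply]
        refine (lt_of_lt_of_le (hc hk) ?_).ne'
        refine le_trans ?_ (single_le_sum (fun _ _ => Nat.zero_le _)
          (mem_univ (⟨k - 1, by omega⟩ : Fin k)))
        simp
      have h3 : I j ≤ I ⟨k - 1, by omega⟩ := h1.monotone (by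
        rw [Fin.le_def]
        have := j.2
        simp only
        omega)
      have h4 := le_sup (f := fun i : ℕ+ => (i : ℕ)) hl
      have h5 : (I j : ℕ) ≤ I ⟨k - 1, by omega⟩ := h3
      exact h5.trans (h4.trans hN)
    · rintro ⟨⟨h1, _⟩, h2⟩
      exact ⟨h1, h2⟩
  rw [stirF, key, finsum_mem_coe_finset, sum_filter]
  change MvPowerSeries.coeff μ (T k c N) = _
  rw [T, map_sum]
  refine sum_congr rfl fun I _ => ?_
  rw [MvPowerSeries.coeff_monomial]
  simp only [eq_comm]

theorem ncard_finsum {ι : Type} (s : Set ι) : (s.ncard : ℚ) = ∑ᶠ i ∈ s, (1 : ℚ) := by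
  by_cases hs : s.Finite
  · rw [finsum_mem_eq_finite_toFinset_sum _ hs, Set.ncard_eq_toFinset_card s hs]
    simp
  · rw [Set.Infinite.ncard hs, finsum_mem_eq_zero_of_infinite]
    · simp
    · have : (Function.support fun _ : ι => (1 : ℚ)) = Set.univ := by
        ext
        simp
      rw [this, Set.inter_univ]
      exact hs

theorem Mqs_eq (α : List ℕ) : Mqs α = stirF α.length (fun j => (α.get j, 0)) := by
  funext μ
  simp only [Mqs, stirF, pow_zero, prod_const_one]
  exact ncard_finsum _

theorem stirM_eq (c : List (ℕ × ℕ)) : stirM c = stirF c.length c.get := rfl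

theorem stirF_mem (k : ℕ) (w : Fin k → ℕ) (hw : ∀ h : 0 < k, 0 < w ⟨k - 1, by omega⟩) :
    ∃ α : List ℕ, LeftWeak α ∧ stirF k (fun j => (w j, 0)) = Mqs α := by
  obtain ⟨l, hl⟩ := (List.equivSigmaTuple (α := ℕ)).surjective ⟨k, w⟩
  have hl' : (⟨l.length, l.get⟩ : Σ n, Fin n → ℕ) = ⟨k, w⟩ := hl
  cases hl'
  refine ⟨l, ?_, (Mqs_eq l).symm⟩
  intro a ha
  rw [List.getLast?_eq_getElem?, List.getElem?_eq_some_iff] at ha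
  obtain ⟨h, rfl⟩ := ha
  exact hw (by omega)

theorem lim_L (a : ℕ) (ha : 0 < a) {F : ℕ → R} (hF : F ∈ A) :
    ∃ s ∈ Submodule.span ℚ {F : R | ∃ α : List ℕ, LeftWeak α ∧ F = Mqs α}, Lim (L a F) s := by
  refine Submodule.span_induction (p := fun F _ => ∃ s ∈ Submodule.span ℚ
    {F : R | ∃ α : List ℕ, LeftWeak α ∧ F = Mqs α}, Lim (L a F) s) ?_ ?_ ?_ ?_ hF
  · rintro _ ⟨⟨k, w⟩, rfl⟩
    have hpos : ∀ h : 0 < k + 1,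
        0 < (Fin.snoc w a : Fin (k + 1) → ℕ) ⟨k + 1 - 1, by omega⟩ := by
      intro _
      change 0 < (Fin.snoc w a : Fin (k + 1) → ℕ) (Fin.last k)
      rwa [Fin.snoc_last]
    refine ⟨_, Submodule.subset_span (stirF_mem (k + 1) (Fin.snoc w a) hpos), ?_⟩
    rw [L_W]
    exact lim_T _ _ hpos
  · refine ⟨0, Submodule.zero_mem _, ?_⟩
    rw [map_zero]
    exact fun μ => Filter.Eventually.of_forall fun _ => rfl
  · rintro F G _ _ ⟨s, hs, h1⟩ ⟨t, ht, h2⟩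
    refine ⟨s + t, Submodule.add_mem _ hs ht, fun μ => ?_⟩
    filter_upwards [h1 μ, h2 μ] with N h h'
    rw [map_add]
    change L a F N μ + L a G N μ = s μ + t μ
    rw [h, h']
  · rintro r F _ ⟨s, hs, h1⟩
    refine ⟨r • s, Submodule.smul_mem _ r hs, fun μ => ?_⟩
    filter_upwards [h1 μ] with N h
    rw [map_smul]
    change r • L a F N μ = r • s μ
    rw [h]

theorem stirF_span : ∀ (k : ℕ) (c : Fin k → ℕ × ℕ)
    (_ : ∀ h : 0 < k, 0 < (c ⟨k - 1, by omega⟩).1),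
    stirF k c ∈ Submodule.span ℚ {F : R | ∃ α : List ℕ, LeftWeak α ∧ F = Mqs α}
  | 0, c, _ => by
      have : c = fun j => ((Fin.elim0 : Fin 0 → ℕ) j, 0) := Subsingleton.elim _ _
      rw [this]
      exact Submodule.subset_span (stirF_mem 0 _ (fun h => absurd h (lt_irrefl _)))
  | k + 1, c, hc => by
      have h1 := lim_T _ c hc
      rw [T_succ] at h1
      obtain ⟨s, hs, h2⟩ := lim_L (c (Fin.last k)).1 (hc (Nat.succ_pos k))
        (pow_mem (T_mem k (Fin.init c)) (c (Fin.last k)).2)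
      rw [h1.unique h2]
      exact hs

end StirAux

/-- The ℚ-linear span in ℚ[[X]] of the Stirling left weak quasisymmetric
functions M̂_{(α;β)}, over all upper-left weak bicompositions (α;β), equals the ℚ-linear
span of the monomial left weak quasisymmetric functions M_α, over all left weak
compositions α. -/
theorem stmt16 :
    Submodule.span ℚ
        {F : MvPowerSeries ℕ+ ℚ | ∃ c : List (ℕ × ℕ), UpperLeftWeak c ∧ F = stirM c} =
    Submodule.span ℚ
        {F : MvPowerSeries ℕ+ ℚ | ∃ α : List ℕ, LeftWeak α ∧ F = Mqs α} := by
  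
  apply le_antisymm
  · refine Submodule.span_le.mpr ?_
    rintro _ ⟨c, hc, rfl⟩
    rw [StirAux.stirM_eq]
    refine StirAux.stirF_span _ _ fun h => hc _ ?_
    rw [List.getLast?_eq_getElem?, List.getElem?_eq_some_iff]
    exact ⟨by omega, rfl⟩
  · refine Submodule.span_mono ?_
    rintro _ ⟨α, hα, rfl⟩
    obtain ⟨c, hc⟩ := (List.equivSigmaTuple (α := ℕ × ℕ)).surjective
      ⟨α.length, fun j => (α.get j, 0)⟩
    have hc' : (⟨c.length, c.get⟩ : Σ n, Fin n → ℕ × ℕ) =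
      ⟨α.length, fun j => (α.get j, 0)⟩ := hc
    have hcm : c = α.map fun a => (a, 0) := by
      apply (List.equivSigmaTuple (α := ℕ × ℕ)).injective
      rw [hc]
      symm
      apply (List.equivSigmaTuple (α := ℕ × ℕ)).symm.injective
      rw [Equiv.symm_apply_apply]
      change _ = List.ofFn _
      apply List.ext_getElem <;> simp
    refine ⟨c, ?_, ?_⟩
    · intro p hp
      rw [hcm, List.getLast?_map, Option.map_eq_some_iff] at hp
      obtain ⟨a, ha, rfl⟩ := hp
      exact hα a ha
    · rw [StirAux.Mqs_eq, StirAux.stirM_eq]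
      exact (congrArg (fun s : Σ n, Fin n → ℕ × ℕ => StirAux.stirF s.1 s.2) hc').symm
end

section
/- For left weak compositions α and α', every list occurring in the quasi-shuffle product α*α', taken over the additive monoid ℕ, is again a left weak composition, and M_α · M_{α'} = M_{α*α'} in ℚ[[X]], where M is extended ℚ-linearly to ℚ-linear combinations of left weak compositions. -/
open Finset

theorem leftWeak_cons {c : ℕ} {l : List ℕ} :
    LeftWeak (c :: l) ↔ LeftWeak l ∧ (l = [] → 0 < c) := by
  cases l with
  | nil => simp [LeftWeak]
  | cons d l => simp [LeftWeak]

theorem qsh_support_s17 (α β : List ℕ) (h : LeftWeak α) (h' : LeftWeak β) :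
    ∀ γ ∈ (qsh α β).support, LeftWeak γ ∧ (γ = [] → α = [] ∧ β = []) := by
  induction α, β using qsh.induct with
  | case1 b =>
    intro γ hγ
    rw [qsh] at hγ
    have := Finsupp.support_single_subset hγ
    simp at this
    subst this
    simp [h']
  | case2 a a' =>
    intro γ hγ
    rw [qsh] at hγ
    have := Finsupp.support_single_subset hγ
    simp at this
    subst this
    simp [h]
  | case3 a a' b b' ih1 ih2 ih3 =>
    intro γ hγ
    have ha := (leftWeak_cons.1 h)
    have hb := (leftWeak_cons.1 h')
    rw [qsh] at hγ
    classical
    rcases Finset.mem_union.1 (Finsupp.support_add hγ) with hγ | hγ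
    · rcases Finset.mem_union.1 (Finsupp.support_add hγ) with hγ | hγ
      · obtain ⟨δ, hδ, rfl⟩ := Finset.mem_image.1 (Finsupp.mapDomain_support hγ)
        have := ih1 ha.1 h' δ hδ
        refine ⟨leftWeak_cons.2 ⟨this.1, fun e => ?_⟩, by simp⟩
        simpa using this.2 e
      · obtain ⟨δ, hδ, rfl⟩ := Finset.mem_image.1 (Finsupp.mapDomain_support hγ)
        have := ih2 h hb.1 δ hδ
        refine ⟨leftWeak_cons.2 ⟨this.1, fun e => ?_⟩, by simp⟩
        simpa using this.2 e
    · obtain ⟨δ, hδ, rfl⟩ := Finset.mem_image.1 (Finsupp.mapDomain_support hγ)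
      have := ih3 ha.1 hb.1 δ hδ
      refine ⟨leftWeak_cons.2 ⟨this.1, fun e => ?_⟩, by simp⟩
      have := ha.2 (this.2 e).1
      omega

/-- exponent vector of a pair of lists -/
noncomputable def expo (S : List ℕ+) (α : List ℕ) : ℕ+ →₀ ℕ :=
  (List.zipWith (fun i a => Finsupp.single i a) S α).sum

/-- truncated version of `Mqs` -/
noncomputable def FF (L : List ℕ+) (α : List ℕ) : MvPowerSeries ℕ+ ℚ :=
  ((L.sublistsLen α.length).map (fun S => MvPowerSeries.monomial (expo S α) (1 : ℚ))).sum

theorem FF_nil (L : List ℕ+) : FF L [] = 1 := by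
  simp [FF, expo]

theorem FF_nil_cons (a : ℕ) (α : List ℕ) : FF [] (a :: α) = 0 := by
  simp [FF]

theorem FF_cons_cons (x : ℕ+) (L : List ℕ+) (a : ℕ) (α : List ℕ) :
    FF (x :: L) (a :: α) =
      MvPowerSeries.monomial (Finsupp.single x a) (1 : ℚ) * FF L α + FF L (a :: α) := by
  simp only [FF, List.length_cons, List.sublistsLen_succ_cons, List.map_append, List.sum_append,
    List.map_map]
  rw [add_comm, ← List.sum_map_mul_left]
  congr 3
  funext S
  simp [expo, MvPowerSeries.monomial_mul_monomial]

theorem FF_mul (L : List ℕ+) : ∀ α β : List ℕ,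
    FF L α * FF L β = Finsupp.linearCombination ℚ (FF L) (qsh α β) := by
  induction L with
  | nil =>
    intro α β
    cases α with
    | nil => simp [qsh, FF_nil]
    | cons a α =>
      cases β with
      | nil => simp [qsh, FF_nil]
      | cons b β =>
        simp only [qsh, map_add, Finsupp.linearCombination_mapDomain]
        have : ∀ c : ℕ, (FF [] ∘ fun x => c :: x) = 0 := by
          intro c; funext l; simp [FF_nil_cons]
        simp [this, FF_nil_cons]
  | cons x L ih =>
    intro α β
    cases α with
    | nil => simp [qsh, FF_nil]
    | cons a α =>
      cases β with
      | nil => simp [qsh, FF_nil]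
      | cons b β =>
        have key : ∀ (c : ℕ) (v : List ℕ →₀ ℚ),
            Finsupp.linearCombination ℚ (FF (x :: L)) (v.mapDomain (c :: ·)) =
            MvPowerSeries.monomial (Finsupp.single x c) (1 : ℚ) *
              Finsupp.linearCombination ℚ (FF L) v +
            Finsupp.linearCombination ℚ (FF L) (v.mapDomain (c :: ·)) := by
          intro c v
          simp only [Finsupp.linearCombination_mapDomain]
          simp only [Finsupp.linearCombination_apply, Finsupp.sum, Finset.mul_sum,
            ← Finset.sum_add_distrib, Function.comp, FF_cons_cons, smul_add, mul_smul_comm]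
        have e := ih (a :: α) (b :: β)
        rw [qsh, map_add, map_add] at e
        rw [qsh, map_add, map_add, key, key, key, ← ih, ← ih, ← ih, FF_cons_cons, FF_cons_cons,
          Finsupp.single_add]
        have hm : MvPowerSeries.monomial (Finsupp.single x a + Finsupp.single x b) (1 : ℚ) =
          MvPowerSeries.monomial (Finsupp.single x a) (1 : ℚ) *
          MvPowerSeries.monomial (Finsupp.single x b) (1 : ℚ) := by
          simp [MvPowerSeries.monomial_mul_monomial]
        rw [hm]
        linear_combination e

/-- the list 1..N -/
def LL (N : ℕ) : List ℕ+ := (List.range N).map Nat.succPNat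

theorem mem_LL {N : ℕ} {i : ℕ+} : i ∈ LL N ↔ (i : ℕ) ≤ N := by
  simp only [LL, List.mem_map, List.mem_range]
  constructor
  · rintro ⟨a, h, rfl⟩; simpa using h
  · intro h
    exact ⟨i.natPred, by have := i.natPred_add_one; omega, by simp⟩

theorem LL_sorted (N : ℕ) : (LL N).Pairwise (· < ·) := by
  rw [LL, List.pairwise_map]
  exact (List.pairwise_lt_range).imp (by intro a b h; simpa using h)

theorem expo_ofFn : ∀ (α : List ℕ) (I : Fin α.length → ℕ+),
    expo (List.ofFn I) α = ∑ j, Finsupp.single (I j) (α.get j) := by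
  intro α
  induction α with
  | nil => intro I; simp [expo]
  | cons a α ih =>
    intro I
    have := ih (fun j => I j.succ)
    simp only [List.length_cons, List.ofFn_succ, Fin.sum_univ_succ]
    simp only [expo] at this ⊢
    simp [this]

theorem coeff_FF (N : ℕ) (α : List ℕ) (h : LeftWeak α) (μ : ℕ+ →₀ ℕ)
    (hμ : ∀ i ∈ μ.support, (i : ℕ) ≤ N) :
    MvPowerSeries.coeff μ (Mqs α) = MvPowerSeries.coeff μ (FF (LL N) α) := by
  classical
  have hnd : ((LL N).sublistsLen α.length).Nodup :=
    List.nodup_sublistsLen _ ((LL_sorted N).imp ne_of_lt)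
  have h1 : MvPowerSeries.coeff μ (FF (LL N) α) =
      ((((LL N).sublistsLen α.length).toFinset.filter (fun S => expo S α = μ)).card : ℚ) := by
    rw [FF, ← List.sum_toFinset _ hnd, map_sum, Finset.card_filter]
    push_cast
    refine Finset.sum_congr rfl fun S _ => ?_
    rw [MvPowerSeries.coeff_monomial]
    simp [eq_comm]
  rw [h1]
  change ((Set.ncard _ : ℕ) : ℚ) = _
  congr 1
  rw [← Set.ncard_coe_finset,
    ← Set.ncard_image_of_injective _ (List.ofFn_injective (α := ℕ+) (n := α.length))]
  congr 1
  ext S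
  simp only [Set.mem_image, Set.mem_setOf_eq, Finset.coe_filter, List.mem_toFinset,
    List.mem_sublistsLen]
  constructor
  · rintro ⟨I, ⟨hI, hs⟩, rfl⟩
    refine ⟨⟨?_, by simp⟩, by rw [expo_ofFn, hs]⟩
    have hsub : ∀ i ∈ List.ofFn I, i ∈ LL N := by
      intro i hi
      rw [List.mem_ofFn] at hi
      obtain ⟨j, rfl⟩ := hi
      rw [mem_LL]
      have hpos : 0 < α.length := j.pos
      let k : Fin α.length := ⟨α.length - 1, by omega⟩
      have hk : 0 < α.get k := by
        apply h
        rw [List.getLast?_eq_getElem?]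
        simp [k]
      have hjk : I j ≤ I k := hI.monotone (by
        rw [Fin.le_def]; have := j.2; simp only [k]; omega)
      refine le_trans (PNat.coe_le_coe _ _ |>.2 hjk) (hμ _ ?_)
      rw [Finsupp.mem_support_iff, ← hs, Finsupp.finset_sum_apply]
      refine (lt_of_lt_of_le ?_ (Finset.single_le_sum (fun _ _ => Nat.zero_le _)
        (Finset.mem_univ k))).ne'
      simpa using hk
    have hp : (List.ofFn I).Pairwise (· < ·) := by
      rw [List.pairwise_ofFn]; exact fun i j hij => hI hij
    exact List.sublist_of_subperm_of_pairwise
      (List.subperm_of_subset (hp.imp ne_of_lt) hsub) hp (LL_sorted N)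
  · rintro ⟨⟨hS, hl⟩, he⟩
    have hp : S.Pairwise (· < ·) := (LL_sorted N).sublist hS
    obtain ⟨I, rfl⟩ : ∃ I : Fin α.length → ℕ+, List.ofFn I = S := by
      rw [← hl]; exact ⟨S.get, List.ofFn_get S⟩
    refine ⟨I, ⟨?_, by rw [← expo_ofFn, he]⟩, rfl⟩
    rw [List.pairwise_ofFn] at hp
    exact fun i j hij => hp hij

theorem stmt17 (α α' : List ℕ) (h : LeftWeak α) (h' : LeftWeak α') :
    (∀ γ ∈ (qsh α α').support, LeftWeak γ) ∧
    Mqs α * Mqs α' = (qsh α α').sum fun γ q => q • Mqs γ := by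
  classical
  have hs : ∀ γ ∈ (qsh α α').support, LeftWeak γ := fun γ hγ => (qsh_support_s17 α α' h h' γ hγ).1
  refine ⟨hs, ?_⟩
  ext μ
  let N : ℕ := μ.support.sup (fun i => (i : ℕ))
  have hN : ∀ i ∈ μ.support, (i : ℕ) ≤ N := fun i hi =>
    Finset.le_sup (f := fun i : ℕ+ => (i : ℕ)) hi
  have e := congrArg (MvPowerSeries.coeff μ) (FF_mul (LL N) α α')
  rw [Finsupp.linearCombination_apply, Finsupp.sum, map_sum, MvPowerSeries.coeff_mul] at e
  rw [Finsupp.sum, map_sum, MvPowerSeries.coeff_mul]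
  calc _ = _ := Finset.sum_congr rfl fun p hp => ?_
    _ = _ := e
    _ = _ := Finset.sum_congr rfl fun γ hγ => ?_
  · rw [Finset.HasAntidiagonal.mem_antidiagonal] at hp
    rw [coeff_FF N α h, coeff_FF N α' h']
    · intro i hi
      apply hN
      rw [Finsupp.mem_support_iff] at hi ⊢
      rw [← hp, Finsupp.add_apply]; omega
    · intro i hi
      apply hN
      rw [Finsupp.mem_support_iff] at hi ⊢
      rw [← hp, Finsupp.add_apply]; omega
  · rw [MvPowerSeries.coeff_smul, MvPowerSeries.coeff_smul, coeff_FF N γ (hs γ hγ) μ hN]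
end

section
/- Let α be a nonempty left weak composition and let n be a positive integer. Then, in the free ℚ-module on finite lists of nonnegative integers equipped with the quasi-shuffle product * over the additive monoid ℕ, the element (α·0^n) − (0^n * α) lies in the ℚ-linear span of the lists (γ·0^j) with γ a left weak composition and 0 ≤ j < n; here 0^n denotes the list of n zeros and · denotes concatenation of lists. -/
open Finset

/-- span of the lists γ·0^j with γ nonempty left weak and j < n -/
noncomputable def Wsp (n : ℕ) : Submodule ℚ (List ℕ →₀ ℚ) :=
  Submodule.span ℚ {x : List ℕ →₀ ℚ | ∃ (γ : List ℕ) (j : ℕ),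
    γ ≠ [] ∧ LeftWeak γ ∧ j < n ∧ x = Finsupp.single (γ ++ List.replicate j 0) (1 : ℚ)}

theorem leftWeak_cons_s19 {c : ℕ} {γ : List ℕ} (hγ : γ ≠ []) : LeftWeak (c :: γ) ↔ LeftWeak γ := by
  cases γ with
  | nil => exact absurd rfl hγ
  | cons d γ => simp [LeftWeak, List.getLast?_cons_cons]

theorem Wsp_single {γ : List ℕ} {j n : ℕ} (h1 : γ ≠ []) (h2 : LeftWeak γ) (h3 : j < n) :
    Finsupp.single (γ ++ List.replicate j 0) (1 : ℚ) ∈ Wsp n :=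
  Submodule.subset_span ⟨γ, j, h1, h2, h3, rfl⟩

theorem Wsp_mono {n m : ℕ} (hnm : n ≤ m) : Wsp n ≤ Wsp m := by
  apply Submodule.span_mono
  rintro x ⟨γ, j, h1, h2, h3, h4⟩
  exact ⟨γ, j, h1, h2, by omega, h4⟩

theorem Wsp_map {n : ℕ} (c : ℕ) {x : List ℕ →₀ ℚ} (hx : x ∈ Wsp n) :
    x.mapDomain (c :: ·) ∈ Wsp n := by
  have : Wsp n ≤ (Wsp n).comap (Finsupp.lmapDomain ℚ ℚ (c :: ·)) := by
    apply Submodule.span_le.2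
    rintro x ⟨γ, j, h1, h2, h3, rfl⟩
    simp only [Submodule.comap_coe, Set.mem_preimage, Finsupp.lmapDomain_apply,
      Finsupp.mapDomain_single, SetLike.mem_coe]
    rw [← List.cons_append]
    exact Wsp_single (by simp) ((leftWeak_cons_s19 h1).2 h2) h3
  exact this hx

theorem qsh_sub_mem (α : List ℕ) : ∀ (_ : α ≠ []) (_ : LeftWeak α) (n : ℕ),
    qsh (List.replicate n 0) α - Finsupp.single (α ++ List.replicate n 0) (1 : ℚ) ∈ Wsp n := by
  induction α with
  | nil => intro h; exact absurd rfl h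
  | cons b b' ih =>
    intro hne h n
    induction n with
    | zero => simp [qsh]
    | succ n ihn =>
      have full : ∀ (β : List ℕ), β ≠ [] → LeftWeak β →
          qsh (List.replicate n 0) β - Finsupp.single (β ++ List.replicate n 0) (1 : ℚ) ∈ Wsp n →
          qsh (List.replicate n 0) β ∈ Wsp (n + 1) := by
        intro β h1 h2 h3
        have := Submodule.add_mem _ (Wsp_mono (Nat.le_succ n) h3)
          (Wsp_single h1 h2 (Nat.lt_succ_self n))
        simpa using this
      have t1 := Wsp_map 0 (full _ hne h ihn)
      have t3 : (qsh (List.replicate n 0) b').mapDomain ((0 + b) :: ·) ∈ Wsp (n + 1) := by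
        rw [zero_add]
        by_cases hb : b' = []
        · subst hb
          have e : qsh (List.replicate n 0) ([] : List ℕ)
              = Finsupp.single (List.replicate n 0) 1 := by
            cases n <;> simp [qsh, List.replicate_succ]
          rw [e, Finsupp.mapDomain_single]
          exact Wsp_single (γ := [b]) (by simp) h (Nat.lt_succ_self n)
        · have h' := (leftWeak_cons_s19 hb).1 h
          exact Wsp_map b (full _ hb h' (ih hb h' n))
      have t2 : (qsh (List.replicate (n + 1) 0) b').mapDomain (b :: ·)
          - Finsupp.single (b :: b' ++ List.replicate (n + 1) 0) (1 : ℚ) ∈ Wsp (n + 1) := by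
        by_cases hb : b' = []
        · subst hb
          simp [qsh, List.replicate_succ, Finsupp.mapDomain_single]
        · have h' := (leftWeak_cons_s19 hb).1 h
          have := Wsp_map b (ih hb h' (n + 1))
          rw [← Finsupp.lmapDomain_apply ℚ ℚ, map_sub] at this
          simpa [Finsupp.lmapDomain_apply, Finsupp.mapDomain_single] using this
      have := Submodule.add_mem _ (Submodule.add_mem _ t1 t2) t3
      rw [List.replicate_succ] at this ⊢
      rw [qsh]
      convert this using 1
      abel

/-- For a nonempty left weak composition α and a positive integer n, the
element (α·0^n) − (0^n * α) of the free ℚ-module on finite lists over ℕ (with the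
quasi-shuffle product * over ℕ) lies in the ℚ-linear span of the lists (γ·0^j) with γ left
weak and 0 ≤ j < n. -/
theorem stmt19 (α : List ℕ) (hne : α ≠ []) (h : LeftWeak α) (n : ℕ) (hn : 0 < n) :
    Finsupp.single (α ++ List.replicate n 0) (1 : ℚ) - qsh (List.replicate n 0) α ∈
      Submodule.span ℚ {x : List ℕ →₀ ℚ | ∃ (γ : List ℕ) (j : ℕ),
        LeftWeak γ ∧ j < n ∧ x = Finsupp.single (γ ++ List.replicate j 0) (1 : ℚ)} := by
  have h1 := Submodule.neg_mem _ (qsh_sub_mem α hne h n)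
  rw [neg_sub] at h1
  refine Submodule.span_mono ?_ h1
  rintro x ⟨γ, j, _, h2, h3, h4⟩
  exact ⟨γ, j, h2, h3, h4⟩
end
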